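/- arXiv:2311.01114 — 2 statements merged into one kernel-verified Lean document; each statement's English description precedes it below -/
import Mathlib

section
/- Let X be a finite non-degenerate indecomposable cycle set with |X| > 1. Then X has finite primitive level if and only if there exist a trivial indecomposable cycle set Y with |Y| > 1 and a cycle set epimorphism p : X → Y. -/
/-!
The key fact is that a finite non-degenerate primitive cycle set `Y` with more than one element is
trivial (`CycleSet.isTrivial_of_primitive`). A chain witnessing finite primitive level composes to
an epimorphism from `X` onto its primitive last member, which inherits non-degeneracy and is
therefore a trivial indecomposable quotient. Conversely, a trivial indecomposable cycle set is a
cycle `y ↦ s y`, so it maps onto the cyclic cycle set on `ZMod ℓ` for some prime `ℓ`, and that one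
is primitive; this gives a chain of length one or two.

For the key fact, the permutations `g ↦ σ_{g x} g` of `G = G(Y)` commute and generate an abelian
group `A` that is regular on `G`. Evaluation at `1` is a bijective cocycle `A → G`, for the action
of `G` on `A` by conjugation with right multiplications. By primitivity the equivariant map
`E : Y → A`, sending `x` to `g ↦ σ_{g x} g`, is constant, in which case `Y` is trivial, or
injective. The second case is excluded as follows (`no_faithful_primitive`).

The part of `A` of order prime to `p` corresponds to a `p`-complement in `G`, so `G` is solvable by
the converse of Hall's theorem (`hall_converse`). That theorem rests on Burnside's `p^a q^b`
theorem, which is proved here with characters, through the Wedderburn decomposition of `ℂ[G]`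
(`class_prime_power`). Hence `G` has a nontrivial abelian normal subgroup `N` of prime exponent `p`,
and by primitivity `N` is regular and self-centralizing. For a prime `q ≠ p`, counting the
characters of `N` in `A / q A` (`char_count`) shows that `E` is constant modulo `q A`: otherwise
`q ^ d ∣ d!` with `d > 0`. It follows that `A` is cyclic modulo its `p`-part `K`. If `E` is
injective modulo `K`, then `G` is an abelian `p`-group and `A = K`, which is absurd. Otherwise `G`
acts trivially on `A / K`, and `K` corresponds to a normal `p`-subgroup of `G`, which has to be
regular on `Y`. So a multiple of `E` is an equivariant bijection from `Y` onto `K`, contradicting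
that `G` fixes `0`.
-/

/-- A cycle set: each left multiplication `σ_x = op x` is bijective and
`(x·y)·(x·z) = (y·x)·(y·z)`. -/
structure CycleSet (X : Type) where
  op : X → X → X
  bij : ∀ x, Function.Bijective (op x)
  cyc : ∀ x y z, op (op x y) (op x z) = op (op y x) (op y z)

namespace CycleSet

variable {X Y : Type}

/-- The left multiplication `σ_x` as a permutation of `X`. -/
noncomputable def sigma (C : CycleSet X) (x : X) : Equiv.Perm X :=
  Equiv.ofBijective _ (C.bij x)

/-- Non-degeneracy: the squaring map `x ↦ x·x` is bijective. -/
def Nondeg (C : CycleSet X) : Prop := Function.Bijective fun x => C.op x x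

/-- The associated permutation group `G(X)`, generated by the `σ_x`. -/
noncomputable def G (C : CycleSet X) : Subgroup (Equiv.Perm X) :=
  Subgroup.closure (Set.range C.sigma)

/-- The displacement group `Dis(X)`, generated by the `σ_x σ_y⁻¹`. -/
noncomputable def Dis (C : CycleSet X) : Subgroup (Equiv.Perm X) :=
  Subgroup.closure {g | ∃ x y, g = C.sigma x * (C.sigma y)⁻¹}

/-- A subgroup of `Sym(X)` acts transitively on `X`. -/
def SubgroupTransitive (H : Subgroup (Equiv.Perm X)) : Prop :=
  ∀ a b : X, ∃ g ∈ H, g a = b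

/-- Indecomposability: `G(X)` acts transitively on `X`. -/
def Indec (C : CycleSet X) : Prop := SubgroupTransitive C.G

/-- A trivial cycle set: all left multiplications coincide. -/
def IsTrivial (C : CycleSet X) : Prop := ∀ x y z, C.op x z = C.op y z

/-- Cycle set homomorphism. -/
def IsHom (C : CycleSet X) (D : CycleSet Y) (f : X → Y) : Prop :=
  ∀ a b : X, f (C.op a b) = D.op (f a) (f b)

/-- A block for the action of `G(X)` on `X`. -/
def IsBlock (C : CycleSet X) (s : Set X) : Prop :=
  ∀ g ∈ C.G, (⇑g '' s = s ∨ Disjoint (⇑g '' s) s)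

/-- Primitivity: `G(X)` acts transitively on `X` and all blocks are trivial. -/
def Primitive (C : CycleSet X) : Prop :=
  C.Indec ∧ ∀ s : Set X, C.IsBlock s → s.Subsingleton ∨ s = Set.univ

/-- There is a chain `X = X₁ → X₂ → ⋯ → X_k` of epimorphisms of cycle sets with
`|X_i| > |X_{i+1}| > 1` for `1 ≤ i ≤ k-1` and with `X_k` primitive. -/
def HasChain [Finite X] (C : CycleSet X) (k : ℕ) : Prop :=
  ∃ (T : ℕ → Type) (_ : ∀ i, Finite (T i)) (CS : ∀ i, CycleSet (T i)) (e : X → T 0),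
    Function.Bijective e ∧ IsHom C (CS 0) e ∧
    (∀ i, i + 1 < k → Nat.card (T (i + 1)) < Nat.card (T i) ∧ 1 < Nat.card (T (i + 1))) ∧
    (∀ i, i + 1 < k → ∃ p : T i → T (i + 1),
      Function.Surjective p ∧ IsHom (CS i) (CS (i + 1)) p) ∧
    (CS (k - 1)).Primitive

/-- `X` has finite primitive level: some chain as above exists (of positive length). -/
def HasFPL [Finite X] (C : CycleSet X) : Prop := ∃ k, 1 ≤ k ∧ HasChain C k

/-- `fpl(X) = k`: `k` is the largest positive integer admitting a chain as above. -/
def fplEq [Finite X] (C : CycleSet X) (k : ℕ) : Prop :=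
  1 ≤ k ∧ HasChain C k ∧ ∀ m, 1 ≤ m → HasChain C m → m ≤ k

end CycleSet

/-! ### Conjugacy classes of prime power size -/

section

open Polynomial

/-- If the average of finitely many roots of unity is a nonzero algebraic integer, then all of them
are equal: every conjugate of the average has absolute value at most `1`, so by Kronecker's theorem
the average is a root of unity, and equality holds in the triangle inequality. -/
theorem avg_roots {ι : Type*} [Fintype ι] [Nonempty ι] (z : ι → ℂ) (N : ℕ) (hN : 0 < N)
    (hz : ∀ i, z i ^ N = 1) (hint : IsIntegral ℤ ((∑ i, z i) / (Fintype.card ι : ℂ)))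
    (h0 : ∑ i, z i ≠ 0) : ∀ i, z i = (∑ i, z i) / (Fintype.card ι : ℂ) := by
  set d : ℂ := (Fintype.card ι : ℂ) with hd
  have hd0 : d ≠ 0 := by simp [hd]
  set α : ℂ := (∑ i, z i) / d with hα
  have hα0 : α ≠ 0 := div_ne_zero h0 hd0
  let S : Set ℂ := Set.range z
  let K := IntermediateField.adjoin ℚ S
  have hzint : ∀ i, IsIntegral ℚ (z i) := fun i =>
    ⟨X ^ N - 1, by simpa using monic_X_pow_sub_C (1 : ℚ) hN.ne', by simp [hz i]⟩
  have : FiniteDimensional ℚ K := by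
    have : Finite S := Set.finite_range z
    apply IntermediateField.finiteDimensional_adjoin
    rintro _ ⟨i, rfl⟩
    exact hzint i
  have : NumberField K := { to_charZero := inferInstance, to_finiteDimensional := this }
  let w : ι → K := fun i => ⟨z i, IntermediateField.subset_adjoin ℚ S ⟨i, rfl⟩⟩
  let β : K := (∑ i, w i) / (Fintype.card ι : K)
  have hβ : (β : ℂ) = α := by simp [β, hα, hd, w]
  have hβ0 : β ≠ 0 := by
    intro h
    rw [h] at hβ
    exact hα0 (by simpa using hβ.symm)
  have hβi : IsIntegral ℤ β := by
    rw [← isIntegral_algebraMap_iff (B := ℂ) (FaithfulSMul.algebraMap_injective K ℂ)]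
    change IsIntegral ℤ (β : ℂ)
    rwa [hβ]
  have hnorm : ∀ φ : K →+* ℂ, ‖φ β‖ ≤ 1 := by
    intro φ
    have hw : ∀ i, ‖φ (w i)‖ = 1 := by
      intro i
      have : w i ^ N = 1 := by
        apply Subtype.ext
        simpa [w] using hz i
      apply Complex.norm_eq_one_of_pow_eq_one (n := N) _ hN.ne'
      rw [← map_pow, this, map_one]
    have hle : ‖∑ i, φ (w i)‖ ≤ Fintype.card ι := by
      refine (norm_sum_le _ _).trans ?_
      simp [hw]
    simp only [β, map_div₀, map_sum, map_natCast, norm_div, Complex.norm_natCast]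
    rw [div_le_one (by positivity)]
    exact hle
  obtain ⟨n, hn, hpow⟩ := NumberField.Embeddings.pow_eq_one_of_norm_le_one K ℂ hβ0 hβi hnorm
  have hα1 : ‖α‖ = 1 := by
    apply Complex.norm_eq_one_of_pow_eq_one (n := n) _ hn.ne'
    rw [← hβ]
    exact_mod_cast congrArg (Subtype.val) hpow
  have hz1 : ∀ i, ‖z i‖ = 1 := fun i => Complex.norm_eq_one_of_pow_eq_one (hz i) hN.ne'
  have hsum : ∑ i, ((starRingEnd ℂ) α * z i).re = ∑ i : ι, (1 : ℝ) := by
    rw [← Complex.re_sum, ← Finset.mul_sum]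
    have : ∑ i, z i = d * α := by rw [hα]; field_simp
    rw [this, mul_left_comm, mul_comm _ α, Complex.mul_conj, Complex.normSq_eq_norm_sq, hα1]
    simp [hd]
  have hle : ∀ i ∈ Finset.univ, ((starRingEnd ℂ) α * z i).re ≤ 1 := by
    intro i _
    refine (Complex.re_le_norm _).trans ?_
    simp [hα1, hz1]
  intro i
  have h1 := (Finset.sum_eq_sum_iff_of_le hle).1 hsum i (Finset.mem_univ i)
  have h2 : (starRingEnd ℂ) α * z i = 1 := by
    have hn : ‖(starRingEnd ℂ) α * z i‖ = 1 := by simp [hα1, hz1]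
    have := Complex.sq_norm ((starRingEnd ℂ) α * z i)
    rw [hn, Complex.normSq_apply, h1] at this
    apply Complex.ext
    · simpa using h1
    · simp only [Complex.one_im]; nlinarith
  have h3 : α * (starRingEnd ℂ) α = 1 := by
    rw [Complex.mul_conj, Complex.normSq_eq_norm_sq, hα1]; simp
  calc z i = α * (starRingEnd ℂ) α * z i := by rw [h3, one_mul]
    _ = α := by rw [mul_assoc, h2, mul_one]

theorem charpoly_root_pow {d : ℕ} (M : Matrix (Fin d) (Fin d) ℂ) (N : ℕ) (hM : M ^ N = 1) :
    ∀ μ, M.charpoly.IsRoot μ → μ ^ N = 1 := by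
  let f : Module.End ℂ (Fin d → ℂ) := Matrix.toLin' M
  intro μ hμ
  have h1 : f.HasEigenvalue μ := by
    rw [Module.End.hasEigenvalue_iff_isRoot_charpoly, Matrix.charpoly_toLin']
    exact hμ
  obtain ⟨v, hv⟩ := h1.exists_hasEigenvector
  have h2 := hv.pow_apply N
  have h3 : f ^ N = 1 := by
    rw [← Matrix.toLin'_pow, hM, Matrix.toLin'_one]; rfl
  rw [h3] at h2
  have h4 : (μ ^ N - 1) • v = 0 := by
    rw [sub_smul, one_smul, ← h2]; simp
  rcases smul_eq_zero.1 h4 with h | h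
  · exact sub_eq_zero.1 h
  · exact (hv.2 h).elim

theorem trace_integral {d : ℕ} (M : Matrix (Fin d) (Fin d) ℂ) (N : ℕ) (hN : 0 < N)
    (hM : M ^ N = 1) : IsIntegral ℤ M.trace := by
  rw [Matrix.trace_eq_sum_roots_charpoly]
  refine IsIntegral.multiset_sum fun x hx => ?_
  refine IsIntegral.of_pow hN ?_
  rw [charpoly_root_pow M N hM x (isRoot_of_mem_roots hx)]
  exact isIntegral_one

/-- The matrix form of `avg_roots`: a matrix of finite order whose normalized trace is a nonzero
algebraic integer is scalar. -/
theorem matrix_scalar {d : ℕ} [NeZero d] (M : Matrix (Fin d) (Fin d) ℂ) (N : ℕ) (hN : 0 < N)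
    (hM : M ^ N = 1) (hint : IsIntegral ℤ (M.trace / (d : ℂ))) (h0 : M.trace ≠ 0) :
    ∃ μ : ℂ, M = Matrix.scalar (Fin d) μ := by
  have hsq : Squarefree (X ^ N - 1 : ℂ[X]) := by
    have := (X_pow_sub_one_separable_iff (F := ℂ) (n := N)).2 (by exact_mod_cast hN.ne')
    exact this.squarefree
  have hcard : M.charpoly.roots.card = d := by
    rw [IsAlgClosed.card_roots_eq_natDegree, Matrix.charpoly_natDegree_eq_dim, Fintype.card_fin]
  set L := M.charpoly.roots.toList with hL
  have hLlen : L.length = d := by rw [hL, Multiset.length_toList, hcard]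
  let f : Module.End ℂ (Fin d → ℂ) := Matrix.toLin' M
  have hroot := charpoly_root_pow M N hM
  let z : Fin d → ℂ := fun i => L.get (i.cast hLlen.symm)
  have hzmem : ∀ μ, M.charpoly.IsRoot μ → ∃ i, z i = μ := by
    intro μ hμ
    have : μ ∈ L := by
      rw [hL, Multiset.mem_toList, mem_roots (Matrix.charpoly_monic M).ne_zero]; exact hμ
    obtain ⟨i, hi⟩ := List.get_of_mem this
    exact ⟨i.cast hLlen, by simpa [z] using hi⟩
  have hzr : ∀ i, M.charpoly.IsRoot (z i) := by
    intro i
    have : z i ∈ L := List.get_mem _ _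
    rw [hL, Multiset.mem_toList] at this
    exact isRoot_of_mem_roots this
  have hsum : ∑ i, z i = M.trace := by
    rw [Matrix.trace_eq_sum_roots_charpoly, ← Multiset.coe_toList M.charpoly.roots, ← hL,
      Multiset.sum_coe]
    have h1 : L.sum = (List.ofFn L.get).sum := by rw [List.ofFn_get]
    rw [h1, List.sum_ofFn]
    exact Fintype.sum_equiv (finCongr hLlen.symm) _ _ (fun i => rfl)
  have key := avg_roots z N hN (fun i => hroot _ (hzr i)) (by simpa [hsum] using hint)
    (by rwa [hsum])
  set μ : ℂ := (∑ i, z i) / (Fintype.card (Fin d) : ℂ) with hμ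
  have hchar : M.charpoly = (X - C μ) ^ d := by
    have h1 := (IsAlgClosed.splits M.charpoly).eq_prod_roots_of_monic (Matrix.charpoly_monic M)
    have h2 : M.charpoly.roots = Multiset.replicate d μ := by
      rw [Multiset.eq_replicate]
      refine ⟨hcard, fun b hb => ?_⟩
      obtain ⟨i, hi⟩ := hzmem b (isRoot_of_mem_roots hb)
      rw [← hi, key i]
    rw [h1, h2]; simp
  have hnil : IsNilpotent (f - algebraMap ℂ _ μ) := by
    refine ⟨d, ?_⟩
    have := LinearMap.aeval_self_charpoly f
    rw [Matrix.charpoly_toLin', hchar] at this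
    simpa using this
  have hss : f.IsSemisimple := by
    refine Module.End.isSemisimple_of_squarefree_aeval_eq_zero hsq ?_
    have h3 : f ^ N = 1 := by
      rw [← Matrix.toLin'_pow, hM, Matrix.toLin'_one]; rfl
    simp [h3]
  have := Module.End.eq_zero_of_isNilpotent_isSemisimple hnil
    (Module.End.isSemisimple_sub_algebraMap_iff.2 hss)
  refine ⟨μ, ?_⟩
  apply (Matrix.toLin' (R := ℂ)).injective
  rw [show Matrix.toLin' M = f from rfl, sub_eq_zero.1 this]
  ext i j
  simp [Matrix.toLin'_apply, Pi.single_apply]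

theorem trace_pi_matrix {n : ℕ} (d : Fin n → ℕ) (b : Π i, Matrix (Fin (d i)) (Fin (d i)) ℂ) :
    LinearMap.trace ℂ (Π i, Matrix (Fin (d i)) (Fin (d i)) ℂ) (LinearMap.mulLeft ℂ b) =
      ∑ i, (d i : ℂ) * (b i).trace := by
  let B := Pi.basis (fun i => Matrix.stdBasis ℂ (Fin (d i)) (Fin (d i)))
  rw [LinearMap.trace_eq_matrix_trace ℂ B, Matrix.trace, Fintype.sum_sigma]
  refine Finset.sum_congr rfl fun i _ => ?_
  rw [Fintype.sum_prod_type, Finset.sum_comm]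
  have : ∀ c r : Fin (d i),
      Matrix.diag ((LinearMap.toMatrix B B) (LinearMap.mulLeft ℂ b)) ⟨i, (r, c)⟩ = b i r r := by
    intro c r
    rw [Matrix.diag_apply, LinearMap.toMatrix_apply, Pi.basis_repr, Pi.basis_apply,
      Matrix.stdBasis_eq_single, LinearMap.mulLeft_apply, Pi.mul_apply, Pi.single_eq_same]
    change (b i * Matrix.single r c (1 : ℂ)) r c = b i r r
    simp
  simp_rw [this]
  simp [Matrix.trace]

/-- The character of the regular representation. -/
theorem trace_mulLeft_of {G : Type*} [Group G] [Fintype G] [DecidableEq G] (h : G) :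
    LinearMap.trace ℂ (MonoidAlgebra ℂ G) (LinearMap.mulLeft ℂ (MonoidAlgebra.of ℂ G h)) =
      if h = 1 then (Fintype.card G : ℂ) else 0 := by
  rw [LinearMap.trace_eq_matrix_trace ℂ (MonoidAlgebra.basis G ℂ), Matrix.trace]
  have : ∀ x : G, Matrix.diag ((LinearMap.toMatrix (MonoidAlgebra.basis G ℂ)
      (MonoidAlgebra.basis G ℂ)) (LinearMap.mulLeft ℂ (MonoidAlgebra.of ℂ G h))) x =
      if h = 1 then 1 else 0 := by
    intro x
    rw [Matrix.diag_apply, LinearMap.toMatrix_apply, LinearMap.mulLeft_apply,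
      MonoidAlgebra.basis_apply, MonoidAlgebra.of_apply, MonoidAlgebra.single_mul_single,
      mul_one, ← MonoidAlgebra.basis_apply, Module.Basis.repr_self, Finsupp.single_apply]
    simp
  simp_rw [this]
  split_ifs <;> simp

theorem not_integral_inv (q : ℕ) (hq : 1 < q) (x : ℂ) (hx : IsIntegral ℤ x)
    (h : (q : ℂ) * x = -1) : False := by
  have hx' : x = algebraMap ℚ ℂ (-1 / q) := by
    have : (q : ℂ) ≠ 0 := by
      have : q ≠ 0 := by omega
      exact_mod_cast this
    rw [map_div₀, map_neg, map_one, map_natCast, eq_div_iff this, mul_comm, h]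
  rw [hx', isIntegral_algebraMap_iff (FaithfulSMul.algebraMap_injective ℚ ℂ),
    IsIntegrallyClosed.isIntegral_iff] at hx
  obtain ⟨y, hy⟩ := hx
  have hq0 : (q : ℚ) ≠ 0 := by
    have : q ≠ 0 := by omega
    exact_mod_cast this
  rw [eq_div_iff hq0] at hy
  have h2 : y * q = -1 := by
    have : ((y * q : ℤ) : ℚ) = ((-1 : ℤ) : ℚ) := by push_cast; simpa using hy
    exact_mod_cast this
  have h3 : (q : ℤ) ∣ 1 := ⟨-y, by linarith [mul_comm y (q : ℤ)]⟩
  have h4 := Int.le_of_dvd one_pos h3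
  omega

/-- A group with a nontrivial conjugacy class of prime power size is either not simple or
commutative. In the Wedderburn decomposition of `ℂ[G]` there is a nontrivial component of degree
prime to `q` on which `g` has nonzero trace; by integrality of the class sum the normalized trace
is an algebraic integer, so `g` acts on that component as a scalar. -/
theorem class_prime_power {G : Type*} [Group G] [Finite G] (g : G) (hg : g ≠ 1) (q k : ℕ)
    (hq : q.Prime) (hcl : Nat.card (conjugatesOf g) = q ^ k) :
    (∃ N : Subgroup G, N.Normal ∧ N ≠ ⊥ ∧ N ≠ ⊤) ∨ ∀ a b : G, a * b = b * a := by
  classical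
  have := Fintype.ofFinite G
  obtain ⟨n, d, hd, ⟨e⟩⟩ :=
    IsSemisimpleRing.exists_algEquiv_pi_matrix_of_isAlgClosed ℂ (MonoidAlgebra ℂ G)
  let u : G →* MonoidAlgebra ℂ G := MonoidAlgebra.of ℂ G
  let ρ : ∀ i, MonoidAlgebra ℂ G →ₐ[ℂ] Matrix (Fin (d i)) (Fin (d i)) ℂ := fun i =>
    (Pi.evalAlgHom ℂ _ i).comp e.toAlgHom
  have hρsurj : ∀ i, Function.Surjective (ρ i) := fun i =>
    (Function.surjective_eval i).comp e.surjective
  have hτ : ∀ a, LinearMap.trace ℂ _ (LinearMap.mulLeft ℂ a) =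
      ∑ i, (d i : ℂ) * (ρ i a).trace := by
    intro a
    have h := trace_pi_matrix d (e a)
    change _ = ∑ i, (d i : ℂ) * (e a i).trace
    rw [← h, ← LinearMap.trace_conj' _ e.toLinearEquiv]
    congr 1
    refine LinearMap.ext fun x => ?_
    simp [LinearEquiv.conj_apply]
  have hτu : ∀ h : G, ∑ i, (d i : ℂ) * (ρ i (u h)).trace =
      if h = 1 then (Fintype.card G : ℂ) else 0 := fun h => by
    rw [← hτ, ← trace_mulLeft_of h]
  have hcent : ∀ a : MonoidAlgebra ℂ G, (∀ h, u h * a = a * u h) → ∀ i, ∃ μ : ℂ,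
      ρ i a = Matrix.scalar _ μ := by
    intro a ha i
    have h1 : ∀ x, x * a = a * x := by
      intro x
      induction x using MonoidAlgebra.induction_on with
      | of m => exact ha m
      | add x y hx hy => rw [add_mul, mul_add, hx, hy]
      | smul r x hx => rw [smul_mul_assoc, mul_smul_comm, hx]
    have h2 : ρ i a ∈ Set.center (Matrix (Fin (d i)) (Fin (d i)) ℂ) := by
      rw [Semigroup.mem_center_iff]
      intro y
      obtain ⟨x, rfl⟩ := hρsurj i y
      rw [← map_mul, ← map_mul, h1]
    rw [Matrix.center_eq_range] at h2
    obtain ⟨μ, hμ⟩ := h2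
    exact ⟨μ, hμ.symm⟩
  have hN : 0 < Nat.card G := Nat.card_pos
  have hpow : ∀ i h, (ρ i (u h)) ^ Nat.card G = 1 := by
    intro i h
    rw [← map_pow, ← map_pow, pow_card_eq_one', map_one, map_one]
  have hχint : ∀ i h, IsIntegral ℤ (ρ i (u h)).trace := fun i h =>
    trace_integral _ _ hN (hpow i h)
  -- the sum of all group elements acts as zero outside the trivial representation
  let s : MonoidAlgebra ℂ G := ∑ h, u h
  have hus : ∀ h, u h * s = s := by
    intro h
    simp only [s, Finset.mul_sum, ← map_mul]
    exact Fintype.sum_equiv (Equiv.mulLeft h) _ _ (fun _ => rfl)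
  have hsu : ∀ h, s * u h = s := by
    intro h
    simp only [s, Finset.sum_mul, ← map_mul]
    exact Fintype.sum_equiv (Equiv.mulRight h) _ _ (fun _ => rfl)
  have hstriv : ∀ i, (∃ h, ρ i (u h) ≠ 1) → ρ i s = 0 := by
    rintro i ⟨h, hh⟩
    obtain ⟨μ, hμ⟩ := hcent s (fun h => by rw [hus, hsu]) i
    have h1 : ρ i (u h) * ρ i s = ρ i s := by rw [← map_mul, hus]
    by_cases hμ0 : μ = 0
    · rw [hμ, hμ0, map_zero]
    · exfalso
      apply hh
      have h2 : μ • ρ i (u h) = μ • (1 : Matrix (Fin (d i)) (Fin (d i)) ℂ) := by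
        have h3 : Matrix.scalar (Fin (d i)) μ = μ • (1 : Matrix (Fin (d i)) (Fin (d i)) ℂ) := by
          rw [Matrix.scalar_apply, Matrix.smul_one_eq_diagonal]
        rw [hμ, h3, mul_smul_comm, mul_one] at h1
        exact h1
      exact smul_right_injective _ hμ0 h2
  have hsum_s : ∑ i, (d i : ℂ) * (ρ i s).trace = Fintype.card G := by
    have : ∀ i, (ρ i s).trace = ∑ h, (ρ i (u h)).trace := fun i => by
      simp only [s, map_sum, Matrix.trace_sum]
    simp_rw [this, Finset.mul_sum]
    rw [Finset.sum_comm]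
    simp_rw [hτu]
    simp
  let T : Finset (Fin n) := Finset.univ.filter fun i => ∃ h, ρ i (u h) ≠ 1
  have hTc : ∀ i ∉ T, ∀ h, ρ i (u h) = 1 := by
    intro i hi
    simpa [T] using hi
  -- the regular character vanishes at `g`, and the trivial components contribute `1` to it
  have hsplit : ∑ i ∈ T, (d i : ℂ) * (ρ i (u g)).trace = -1 := by
    have hcG : (Fintype.card G : ℂ) ≠ 0 := by simp
    have h1 : ∑ i ∈ Tᶜ, (d i : ℂ) * (ρ i (u g)).trace = 1 := by
      have h2 : ∑ i ∈ Tᶜ, (d i : ℂ) * (ρ i s).trace = Fintype.card G := by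
        rw [← hsum_s, ← Finset.sum_add_sum_compl T, right_eq_add]
        refine Finset.sum_eq_zero fun i hi => ?_
        rw [hstriv i (by simpa [T] using hi), Matrix.trace_zero, mul_zero]
      have h3 : ∀ i ∈ Tᶜ, (d i : ℂ) * (ρ i s).trace =
          Fintype.card G * ((d i : ℂ) * (ρ i (u g)).trace) := by
        intro i hi
        have := hTc i (by simpa using hi)
        rw [map_sum, Matrix.trace_sum]
        simp only [this, Matrix.trace_one, Finset.sum_const,
          Finset.card_univ, nsmul_eq_mul, Fintype.card_fin]
        ring
      rw [Finset.sum_congr rfl h3, ← Finset.mul_sum] at h2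
      exact mul_left_cancel₀ hcG (by rw [h2, mul_one])
    have h4 := hτu g
    rw [if_neg hg, ← Finset.sum_add_sum_compl T, h1] at h4
    exact eq_neg_of_add_eq_zero_left h4
  -- a nontrivial component of degree prime to `q` on which `g` has nonzero trace
  obtain ⟨i, hiT, hqd, hχ0⟩ : ∃ i ∈ T, ¬ q ∣ d i ∧ (ρ i (u g)).trace ≠ 0 := by
    by_contra! hcon
    have : ∀ i ∈ T, ∃ x : ℂ, IsIntegral ℤ x ∧ (d i : ℂ) * (ρ i (u g)).trace = q * x := by
      intro i hi
      by_cases hdv : q ∣ d i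
      · obtain ⟨c, hc⟩ := hdv
        refine ⟨c * (ρ i (u g)).trace, ?_, by
          have hc' : (d i : ℂ) = q * c := by exact_mod_cast hc
          rw [hc']; ring⟩
        exact ((isIntegral_natCast (R := ℤ) (B := ℂ) c)).mul (hχint i g)
      · exact ⟨0, isIntegral_zero, by rw [hcon i hi hdv]; simp⟩
    choose! x hx1 hx2 using this
    rw [Finset.sum_congr rfl hx2, ← Finset.mul_sum] at hsplit
    exact not_integral_inv q hq.one_lt _ (IsIntegral.sum _ hx1) hsplit
  -- the class sum is integral over `ℤ` and acts as the scalar `q ^ k * trace / d i`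
  let cl : Finset G := Finset.univ.filter fun h => IsConj g h
  have hclcard : cl.card = q ^ k := by
    rw [← hcl]
    exact (Nat.subtype_card cl (by
      intro x; simp only [cl, Finset.mem_filter, Finset.mem_univ, true_and]; rfl)).symm
  let K : MonoidAlgebra ℂ G := ∑ h ∈ cl, u h
  obtain ⟨ω, hω⟩ : ∃ μ : ℂ, ρ i K = Matrix.scalar _ μ := by
    apply hcent
    intro h
    simp only [K, Finset.mul_sum, Finset.sum_mul, ← map_mul]
    refine Finset.sum_equiv (MulAut.conj h).toEquiv ?_ ?_
    · intro x
      simp only [cl, Finset.mem_filter, Finset.mem_univ, true_and]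
      have : IsConj x ((MulAut.conj h).toEquiv x) := isConj_iff.2 ⟨h, by simp⟩
      exact ⟨fun h1 => h1.trans this, fun h1 => h1.trans this.symm⟩
    · intro x _
      simp
  have htrconj : ∀ h ∈ cl, (ρ i (u h)).trace = (ρ i (u g)).trace := by
    intro h hh
    obtain ⟨c, hc⟩ := isConj_iff.1 (by simpa [cl] using hh : IsConj g h)
    rw [← hc, map_mul u, map_mul u, map_mul (ρ i), map_mul (ρ i), Matrix.trace_mul_comm,
      ← mul_assoc, ← map_mul (ρ i), ← map_mul u, inv_mul_cancel, map_one, map_one, one_mul]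
  have hdω : (d i : ℂ) * ω = q ^ k * (ρ i (u g)).trace := by
    have h1 : (ρ i K).trace = ∑ h ∈ cl, (ρ i (u h)).trace := by
      simp only [K, map_sum, Matrix.trace_sum]
    rw [Finset.sum_congr rfl htrconj, hω, Finset.sum_const, hclcard] at h1
    simpa using h1
  have hωint : IsIntegral ℤ ω := by
    have h1 : IsIntegral ℤ (∑ h ∈ cl, MonoidAlgebra.of ℤ G h) := IsIntegral.of_finite ℤ _
    let φ : MonoidAlgebra ℤ G →ₐ[ℤ] Matrix (Fin (d i)) (Fin (d i)) ℂ :=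
      MonoidAlgebra.lift ℤ _ G ((ρ i : MonoidAlgebra ℂ G →* _).comp u)
    have h2 := h1.map φ
    have h3 : φ (∑ h ∈ cl, MonoidAlgebra.of ℤ G h) = Matrix.scalar _ ω := by
      rw [← hω]
      simp only [K, map_sum]
      refine Finset.sum_congr rfl fun h _ => ?_
      simp [φ]
    rw [h3] at h2
    have hd' := hd i
    have h4 : Function.Injective (Matrix.scalar (Fin (d i)) : ℂ →+* _).toIntAlgHom := by
      intro a b hab
      have := congrFun (congrFun hab 0) 0
      simpa using this
    exact (isIntegral_algHom_iff _ h4).1 h2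
  have hd0 : (d i : ℂ) ≠ 0 := by exact_mod_cast (hd i).out
  have hint : IsIntegral ℤ ((ρ i (u g)).trace / (d i : ℂ)) := by
    have hco : IsCoprime ((q ^ k : ℕ) : ℤ) (d i : ℤ) :=
      Nat.isCoprime_iff_coprime.2 (((Nat.Prime.coprime_iff_not_dvd hq).2 hqd).pow_left k)
    obtain ⟨a, b, hab⟩ := hco
    have h1 : (ρ i (u g)).trace / (d i : ℂ) = a * ω + b * (ρ i (u g)).trace := by
      rw [div_eq_iff hd0]
      have hab' : (a : ℂ) * q ^ k + b * d i = 1 := by exact_mod_cast hab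
      calc (ρ i (u g)).trace = ((a : ℂ) * q ^ k + b * d i) * (ρ i (u g)).trace := by
            rw [hab', one_mul]
        _ = a * (q ^ k * (ρ i (u g)).trace) + b * d i * (ρ i (u g)).trace := by ring
        _ = _ := by rw [← hdω]; ring
    rw [h1]
    exact ((isIntegral_intCast (R := ℤ) (B := ℂ) a).mul hωint).add
      ((isIntegral_intCast (R := ℤ) (B := ℂ) b).mul (hχint i g))
  have hdi := hd i
  obtain ⟨μ, hμ⟩ := matrix_scalar (ρ i (u g)) _ hN (hpow i g) hint hχ0
  let φ : G →* Matrix (Fin (d i)) (Fin (d i)) ℂ := (ρ i : MonoidAlgebra ℂ G →* _).comp u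
  -- the elements of `G` acting centrally form a normal subgroup that contains `g`
  let Z : Subgroup G := (Subgroup.centralizer (Set.range φ.toHomUnits)).comap φ.toHomUnits
  have hZ : ∀ h, h ∈ Z ↔ ∀ x, φ x * φ h = φ h * φ x := by
    intro h
    simp only [Z, Subgroup.mem_comap, Subgroup.mem_centralizer_iff, Set.forall_mem_range,
      Units.ext_iff]
    rfl
  have hZn : Z.Normal := by
    have h1 : (Subgroup.center φ.toHomUnits.range).comap φ.toHomUnits.rangeRestrict = Z := by
      ext h
      rw [hZ, Subgroup.mem_comap, Subgroup.mem_center_iff]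
      simp [Subtype.ext_iff, Units.ext_iff]
      exact ⟨fun H x => H (φ.toHomUnits x) x rfl, fun H a x hx => by rw [← hx]; exact H x⟩
    rw [← h1]; infer_instance
  have hgZ : g ∈ Z := by
    rw [hZ]
    intro x
    have : φ g = Matrix.scalar _ μ := hμ
    rw [this]
    exact ((Matrix.scalar_commute μ (fun r => mul_comm _ _) (φ x)).eq).symm
  by_cases hZt : Z = ⊤
  · by_cases hk : φ.ker = ⊥
    · right
      intro a b
      apply (MonoidHom.ker_eq_bot_iff φ).1 hk
      rw [map_mul, map_mul]
      exact (hZ b).1 (by rw [hZt]; trivial) a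
    · left
      refine ⟨φ.ker, inferInstance, hk, ?_⟩
      intro ht
      obtain ⟨h, hh⟩ : ∃ h, ρ i (u h) ≠ 1 := by simpa [T] using hiT
      exact hh (MonoidHom.mem_ker.1 (by rw [ht]; trivial : h ∈ φ.ker))
  · left
    refine ⟨Z, hZn, ?_, hZt⟩
    intro hb
    rw [hb] at hgZ
    exact hg (Subgroup.mem_bot.1 hgZ)

end

/-! ### Solvable groups and Burnside's theorem -/

theorem centralizer_index_eq {G : Type*} [Group G] [Finite G] (g : G) :
    (Subgroup.centralizer {g}).index = Nat.card (conjugatesOf g) := by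
  have : Finite (ConjAct G) := inferInstanceAs (Finite G)
  have h1 := (Subgroup.centralizer {g}).card_mul_index
  have h2 := (MulAction.stabilizer (ConjAct G) g).card_mul_index
  rw [Subgroup.nat_card_centralizer_nat_card_stabilizer] at h1
  have h3 : Nat.card (ConjAct G) = Nat.card G := rfl
  rw [h3, ← h1] at h2
  have := Nat.eq_of_mul_eq_mul_left Nat.card_pos h2
  rw [← this, MulAction.index_stabilizer, ConjAct.orbit_eq_carrier_conjClasses,
    Nat.card_coe_set_eq]
  rfl

theorem card_quotient_lt {G : Type*} [Group G] [Finite G] {N : Subgroup G} (h : N ≠ ⊥) :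
    Nat.card (G ⧸ N) < Nat.card G := by
  have h1 := N.card_mul_index
  have h2 := N.one_lt_card_iff_ne_bot.2 h
  have h3 : 0 < N.index := Nat.pos_of_ne_zero Subgroup.FiniteIndex.index_ne_zero
  change N.index < _
  nlinarith

theorem card_subgroup_lt {G : Type*} [Group G] [Finite G] {N : Subgroup G} (h : N ≠ ⊤) :
    Nat.card N < Nat.card G :=
  lt_of_le_of_ne N.card_le_card_group (fun hc => h (N.card_eq_iff_eq_top.1 hc))

/-- Burnside's theorem: a finite group whose order has at most two prime divisors is solvable. -/
theorem burnside (p q : ℕ) (hp : p.Prime) (hq : q.Prime) (n : ℕ) :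
    ∀ (G : Type) [Group G] [Finite G], Nat.card G = n →
      (∀ r : ℕ, r.Prime → r ∣ Nat.card G → r = p ∨ r = q) → Group.IsSolvable G := by
  induction n using Nat.strong_induction_on with
  | _ n ih =>
  intro G _ _ hn hG
  rcases subsingleton_or_nontrivial G with hs | hnt
  · infer_instance
  wlog hpd : p ∣ Nat.card G generalizing p q
  · refine this q p hq hp (fun m hm G _ _ hG h => ih m hm G hG fun r hr hrd => (h r hr hrd).symm)
      (fun r hr hrd => (hG r hr hrd).symm) ?_
    obtain ⟨r, hr, hrd⟩ := Nat.exists_prime_and_dvd (Finite.one_lt_card (α := G)).ne'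
    rcases hG r hr hrd with rfl | rfl
    · exact (hpd hrd).elim
    · exact hrd
  have := Fact.mk hp
  obtain ⟨P⟩ : Nonempty (Sylow p G) := inferInstance
  have hPnt : Nontrivial (P : Subgroup G) := by
    rw [← Finite.one_lt_card_iff_nontrivial]
    exact hp.one_lt.trans_le (Nat.le_of_dvd Nat.card_pos (P.dvd_card_of_dvd_card hpd))
  have := P.2.center_nontrivial
  obtain ⟨⟨z, hz⟩, hz1⟩ := exists_ne (1 : Subgroup.center (P : Subgroup G))
  have hz1' : (z : G) ≠ 1 := fun h => hz1 (Subtype.ext (Subtype.ext h))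
  have hle : (P : Subgroup G) ≤ Subgroup.centralizer {(z : G)} := by
    intro x hx
    rw [Subgroup.mem_centralizer_iff]
    intro y hy
    rw [Set.mem_singleton_iff.1 hy]
    exact (congrArg Subtype.val (Subgroup.mem_center_iff.1 hz ⟨x, hx⟩)).symm
  -- the centralizer of `z` contains a Sylow `p`-subgroup, so the class of `z` has `q`-power size
  have hcl : Nat.card (conjugatesOf (z : G)) =
      q ^ (Nat.card (conjugatesOf (z : G))).primeFactorsList.length := by
    rw [← centralizer_index_eq]
    refine Nat.eq_prime_pow_of_unique_prime_dvd Subgroup.FiniteIndex.index_ne_zero ?_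
    intro r hr hrd
    rcases hG r hr (hrd.trans (Subgroup.index_dvd_card _)) with rfl | rfl
    · exact (P.not_dvd_index (hrd.trans (Subgroup.index_dvd_of_le hle))).elim
    · rfl
  rcases class_prime_power (z : G) hz1' q _ hq hcl with ⟨N, hN, hb, ht⟩ | hc
  · rw [Group.isSolvable_iff_subgroup_quotient N]
    refine ⟨ih _ (hn ▸ card_subgroup_lt ht) N rfl fun r hr hrd =>
      hG r hr (hrd.trans N.card_subgroup_dvd_card),
      ih _ (hn ▸ card_quotient_lt hb) (G ⧸ N) rfl fun r hr hrd =>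
      hG r hr (hrd.trans N.card_quotient_dvd_card)⟩
  · exact Group.isSolvable_of_comm hc

/-- A nontrivial finite solvable group has a nontrivial normal abelian subgroup of prime
exponent. -/
theorem exists_elementary_normal (G : Type*) [Group G] [Finite G] [Nontrivial G]
    [Group.IsSolvable G] : ∃ (p : ℕ) (N : Subgroup G), p.Prime ∧ N.Normal ∧ N ≠ ⊥ ∧
      (∀ a ∈ N, ∀ b ∈ N, a * b = b * a) ∧ ∀ a ∈ N, a ^ p = 1 := by
  classical
  have hex := (Group.isSolvable_def G).1 inferInstance
  have hk := Nat.find_spec hex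
  have hk0 : Nat.find hex ≠ 0 := by
    intro h0
    rw [h0, derivedSeries_zero] at hk
    exact top_ne_bot hk
  obtain ⟨m, hm⟩ := Nat.exists_eq_succ_of_ne_zero hk0
  have hm' : derivedSeries G m ≠ ⊥ := Nat.find_min hex (by omega)
  rw [hm, derivedSeries_succ, Subgroup.commutator_eq_bot_iff_le_centralizer] at hk
  set M := derivedSeries G m with hM
  have hMn : M.Normal := derivedSeries_normal G m
  have hcomm : ∀ a ∈ M, ∀ b ∈ M, a * b = b * a := fun a ha b hb =>
    Subgroup.mem_centralizer_iff.1 (hk hb) a ha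
  obtain ⟨p, hp, hpd⟩ := Nat.exists_prime_and_dvd (M.one_lt_card_iff_ne_bot.2 hm').ne'
  have := Fact.mk hp
  obtain ⟨x, hx⟩ := exists_prime_orderOf_dvd_card' p hpd
  refine ⟨p, { carrier := {a | a ∈ M ∧ a ^ p = 1}, mul_mem' := ?_, one_mem' := ?_, inv_mem' := ?_ },
    hp, ⟨?_⟩, ?_, ?_, ?_⟩
  · rintro a b ⟨ha, ha'⟩ ⟨hb, hb'⟩
    refine ⟨M.mul_mem ha hb, ?_⟩
    rw [(show Commute a b from hcomm a ha b hb).mul_pow, ha', hb', one_mul]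
  · exact ⟨M.one_mem, one_pow p⟩
  · rintro a ⟨ha, ha'⟩
    exact ⟨M.inv_mem ha, by rw [inv_pow, ha', inv_one]⟩
  · rintro a ⟨ha, ha'⟩ g
    exact ⟨hMn.conj_mem a ha g, by rw [conj_pow, ha', mul_one, mul_inv_cancel]⟩
  · intro hb
    have h1 : (x : G) ∈ (⊥ : Subgroup G) := by
      rw [← hb]
      refine ⟨x.2, ?_⟩
      have := pow_orderOf_eq_one x
      rw [hx] at this
      exact_mod_cast congrArg Subtype.val this
    have h2 : x = 1 := Subtype.ext (Subgroup.mem_bot.1 h1)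
    rw [h2, orderOf_one] at hx
    exact hp.one_lt.ne hx
  · rintro a ⟨ha, _⟩ b ⟨hb, _⟩
    exact hcomm a ha b hb
  · rintro a ⟨_, ha⟩
    exact ha

/-! ### Groups with a complement for every prime -/

theorem relIndex_coprime {G : Type*} [Group G] (H K : Subgroup G)
    (h : Nat.Coprime H.index K.index) : H.index ∣ H.relIndex K := by
  have h1 : H.relIndex K * K.index = K.relIndex H * H.index := by
    rw [← Subgroup.inf_relIndex_right H K, ← Subgroup.inf_relIndex_right K H,
      Subgroup.relIndex_mul_index inf_le_right, Subgroup.relIndex_mul_index inf_le_right, inf_comm]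
  exact h.dvd_of_dvd_mul_right (Dvd.intro_left _ h1.symm)

/-- If `H` and `K` have coprime indices, then `K` is transitive on `G ⧸ H`, that is, `K H = G`. -/
theorem transitive_of_coprime {G : Type*} [Group G] [Finite G] (H K : Subgroup G)
    (h : Nat.Coprime H.index K.index) (c d : G ⧸ H) : ∃ k ∈ K, k • c = d := by
  have h0 : (MulAction.stabilizer G c).index = H.index := by
    rw [MulAction.index_stabilizer_of_transitive]; rfl
  have h1 : MulAction.stabilizer K c = (MulAction.stabilizer G c).subgroupOf K := by
    ext x; rfl
  have h2 := relIndex_coprime (MulAction.stabilizer G c) K (by rwa [h0])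
  have h3 : (MulAction.orbit K c).ncard = (MulAction.stabilizer G c).relIndex K := by
    rw [← MulAction.index_stabilizer, h1]; rfl
  have h4 : MulAction.orbit K c = Set.univ := by
    refine Set.eq_of_subset_of_ncard_le (Set.subset_univ _) ?_
    rw [h3, Set.ncard_univ]
    change H.index ≤ _
    refine Nat.le_of_dvd ?_ (h0 ▸ h2)
    rw [← h3, Set.ncard_pos]
    exact MulAction.nonempty_orbit _
  have h5 : d ∈ MulAction.orbit K c := h4 ▸ Set.mem_univ _
  obtain ⟨k, hk⟩ := h5
  exact ⟨k, k.2, hk⟩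

/-- A normal subgroup of `H₁` of exponent `p` is contained in the core of `H₂`, when `H₂` has
index prime to `p` and to the index of `H₁`. -/
theorem le_core_of_coprime {G : Type*} [Group G] [Finite G] {p : ℕ} (hp : p.Prime)
    (H₁ H₂ : Subgroup G) (L : Subgroup H₁) [hL : L.Normal] (hLp : ∀ a ∈ L, a ^ p = 1)
    (h : Nat.Coprime H₂.index H₁.index) (hp2 : ¬ p ∣ H₂.index) :
    L.map H₁.subtype ≤ H₂.normalCore := by
  have := Fact.mk hp
  have hPL : IsPGroup p L := fun a => ⟨1, by
    rw [pow_one]; exact Subtype.ext (hLp a a.2)⟩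
  obtain ⟨c, hc⟩ := hPL.nonempty_fixed_point_of_prime_not_dvd_card (G ⧸ H₂) hp2
  rintro _ ⟨l, hl, rfl⟩
  rw [Subgroup.normalCore_eq_ker, MonoidHom.mem_ker]
  ext1 d
  rw [MulAction.toPermHom_apply, MulAction.toPerm_apply, Equiv.Perm.one_apply]
  obtain ⟨k, hk, rfl⟩ := transitive_of_coprime H₂ H₁ h c d
  have h1 := hc ⟨_, hL.conj_mem' l hl ⟨k, hk⟩⟩
  have h2 : (k⁻¹ * l * k) • c = c := h1
  change (l : G) • k • c = k • c
  nth_rw 2 [← h2]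
  rw [smul_smul, smul_smul]
  congr 1
  group

/-- A finite group with a `p`-complement for every prime `p` is solvable: this is the converse of Hall's
theorem. Two prime divisors are covered by `burnside`; with a third one, a minimal normal subgroup
of one complement lies in the core of another. -/
theorem hall_converse (n : ℕ) :
    ∀ (G : Type) [Group G] [Finite G], Nat.card G = n →
      (∀ p : ℕ, p.Prime → ∃ H : Subgroup G, ¬ p ∣ Nat.card H ∧ ∃ k, H.index = p ^ k) →
        Group.IsSolvable G := by
  induction n using Nat.strong_induction_on with
  | _ n ih =>
  intro G _ _ hn hG
  by_cases hB : ∃ p q : ℕ, p.Prime ∧ q.Prime ∧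
      ∀ r : ℕ, r.Prime → r ∣ Nat.card G → r = p ∨ r = q
  · obtain ⟨p, q, hp, hq, h⟩ := hB
    exact burnside p q hp hq _ G rfl h
  push Not at hB
  obtain ⟨p₁, hp₁, hd₁, -, -⟩ := hB 2 2 Nat.prime_two Nat.prime_two
  obtain ⟨p₂, hp₂, hd₂, h21, -⟩ := hB p₁ p₁ hp₁ hp₁
  obtain ⟨p₃, hp₃, hd₃, h31, h32⟩ := hB p₁ p₂ hp₁ hp₂
  -- the complements inherit the hypothesis, so they are solvable by induction
  have key : ∀ (p : ℕ), p.Prime → p ∣ Nat.card G → ∀ H : Subgroup G, ¬ p ∣ Nat.card H →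
      (∃ k, H.index = p ^ k) → Group.IsSolvable H := by
    rintro p hp hpd H hpH ⟨k, hk⟩
    have hHt : H ≠ ⊤ := fun h => hpH (by rwa [(H.card_eq_iff_eq_top).2 h])
    refine ih _ (hn ▸ card_subgroup_lt hHt) H rfl fun r hr => ?_
    by_cases hrp : r = p
    · subst hrp
      exact ⟨⊤, by rwa [Subgroup.card_top], 0, by simp⟩
    · obtain ⟨K, hK, e, he⟩ := hG r hr
      refine ⟨K.subgroupOf H, ?_, ?_⟩
      · intro hd
        exact hK (hd.trans (Subgroup.card_comap_dvd_of_injective K H.subtype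
          (Subgroup.subtype_injective H)))
      · refine ⟨e, ?_⟩
        have h1 := relIndex_coprime K H (by
          rw [he, hk]; exact Nat.Coprime.pow _ _ ((Nat.coprime_primes hr hp).2 hrp))
        have h2 : K.relIndex H ≤ K.index := by
          rw [← K.relIndex_top_right]
          exact Subgroup.relIndex_le_of_le_right le_top Subgroup.FiniteIndex.index_ne_zero
        have h3 : 0 < K.relIndex H := Nat.pos_of_ne_zero Subgroup.FiniteIndex.index_ne_zero
        rw [← he]
        exact le_antisymm h2 (Nat.le_of_dvd h3 h1)
  obtain ⟨H₁, hc₁, k₁, hk₁⟩ := hG p₁ hp₁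
  have hs₁ := key p₁ hp₁ hd₁ H₁ hc₁ ⟨k₁, hk₁⟩
  have hnt : Nontrivial H₁ := by
    rw [← Finite.one_lt_card_iff_nontrivial]
    have h1 : p₂ ∣ Nat.card H₁ := by
      rw [← H₁.card_mul_index, hk₁] at hd₂
      exact (Nat.Coprime.pow_right _ ((Nat.coprime_primes hp₂ hp₁).2 h21)).dvd_of_dvd_mul_right hd₂
    exact hp₂.one_lt.trans_le (Nat.le_of_dvd Nat.card_pos h1)
  obtain ⟨p, L, hp, hLn, hLb, -, hLp⟩ := exists_elementary_normal H₁
  obtain ⟨r, hr, hrd, hrp, hr1⟩ : ∃ r : ℕ, r.Prime ∧ r ∣ Nat.card G ∧ r ≠ p ∧ r ≠ p₁ := by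
    by_cases h : p₂ = p
    · exact ⟨p₃, hp₃, hd₃, h ▸ h32, h31⟩
    · exact ⟨p₂, hp₂, hd₂, h, h21⟩
  obtain ⟨H₂, hc₂, k₂, hk₂⟩ := hG r hr
  have hs₂ := key r hr hrd H₂ hc₂ ⟨k₂, hk₂⟩
  have hle := le_core_of_coprime hp H₁ H₂ L hLp
    (by rw [hk₁, hk₂]; exact Nat.Coprime.pow _ _ ((Nat.coprime_primes hr hp₁).2 hr1))
    (by
      rw [hk₂]
      intro hd
      exact hrp ((Nat.prime_dvd_prime_iff_eq hp hr).1 (hp.dvd_of_dvd_pow hd)).symm)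
  have hKb : H₂.normalCore ≠ ⊥ := by
    intro h
    rw [h, le_bot_iff, Subgroup.map_eq_bot_iff_of_injective _ H₁.subtype_injective] at hle
    exact hLb hle
  rw [Group.isSolvable_iff_subgroup_quotient H₂.normalCore]
  constructor
  · exact Group.isSolvable_of_isSolvable_injective
      (Subgroup.inclusion_injective H₂.normalCore_le)
  · refine ih _ (hn ▸ card_quotient_lt hKb) _ rfl fun q hq => ?_
    obtain ⟨K, hK, e, he⟩ := hG q hq
    refine ⟨K.map (QuotientGroup.mk' H₂.normalCore), fun hd => hK (hd.trans
      (K.card_map_dvd _)), ?_⟩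
    have h1 := K.index_map_dvd (QuotientGroup.mk'_surjective H₂.normalCore)
    rw [he, Nat.dvd_prime_pow hq] at h1
    obtain ⟨m, -, hm⟩ := h1
    exact ⟨m, hm⟩

/-! ### Counting characters -/

/-- Commuting operators that preserve a nonzero subspace have a common eigenvector in it. -/
theorem joint_eigenvector {k W ι : Type*} [Field k] [IsAlgClosed k] [AddCommGroup W] [Module k W]
    [FiniteDimensional k W] [Finite ι] (T : ι → Module.End k W)
    (hT : ∀ i j x, T i (T j x) = T j (T i x)) (U : Submodule k W) (hU : U ≠ ⊥)
    (hinv : ∀ i, ∀ x ∈ U, T i x ∈ U) :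
    ∃ x ∈ U, x ≠ 0 ∧ ∀ i, ∃ μ : k, T i x = μ • x := by
  classical
  have := Fintype.ofFinite ι
  have key : ∀ s : Finset ι, ∃ U' ≤ U, U' ≠ ⊥ ∧ (∀ i, ∀ x ∈ U', T i x ∈ U') ∧
      ∀ i ∈ s, ∃ μ : k, ∀ x ∈ U', T i x = μ • x := by
    intro s
    induction s using Finset.induction_on with
    | empty => exact ⟨U, le_rfl, hU, hinv, by simp⟩
    | insert j s _ ih =>
      obtain ⟨U', hle, hb, hst, hs⟩ := ih
      have hnt : Nontrivial U' := Submodule.nontrivial_iff_ne_bot.2 hb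
      obtain ⟨μ, hμ⟩ := Module.End.exists_eigenvalue ((T j).restrict (hst j))
      obtain ⟨⟨v, hv⟩, hvμ⟩ := hμ.exists_hasEigenvector
      have hv0 : v ≠ 0 := fun h => hvμ.2 (Subtype.ext h)
      have hvμ' : T j v = μ • v := congrArg Subtype.val hvμ.apply_eq_smul
      refine ⟨U' ⊓ Module.End.eigenspace (T j) μ, inf_le_left.trans hle, ?_, ?_, ?_⟩
      · rw [Submodule.ne_bot_iff]
        exact ⟨v, ⟨hv, Module.End.mem_eigenspace_iff.2 hvμ'⟩, hv0⟩
      · rintro i x ⟨hx, hx'⟩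
        refine ⟨hst i x hx, Module.End.mem_eigenspace_iff.2 ?_⟩
        rw [hT, Module.End.mem_eigenspace_iff.1 hx', map_smul]
      · intro i hi
        rcases Finset.mem_insert.1 hi with rfl | hi
        · exact ⟨μ, fun x hx => Module.End.mem_eigenspace_iff.1 hx.2⟩
        · obtain ⟨ν, hν⟩ := hs i hi
          exact ⟨ν, fun x hx => hν x hx.1⟩
  obtain ⟨U', hle, hb, -, hs⟩ := key Finset.univ
  obtain ⟨x, hx, hx0⟩ := (Submodule.ne_bot_iff _).1 hb
  refine ⟨x, hle hx, hx0, fun i => ?_⟩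
  obtain ⟨μ, hμ⟩ := hs i (Finset.mem_univ i)
  exact ⟨μ, hμ x hx⟩

/-- Let `N` be a normal self-centralizing abelian subgroup of exponent `p` in `G`, and let `G` act on
an `𝔽_q`-space `V` with `q ≠ p`, such that `N` acts faithfully and `V` is generated by the `N`-orbit
of one vector. If `|V|` divides `|G|`, then `V = 0`.

Over an algebraic closure, every character of `N` occurs in the dual of `V` at most once, so at most
`d = dim V` characters occur. `G` permutes them, and the kernel of this action lies in `N`, whose
order is prime to `q`. Hence `q ^ d` divides `d!`, which forces `d = 0`. -/
theorem char_count {G V : Type} [Group G] [Finite G] [AddCommGroup V] [Finite V] (p q : ℕ)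
    (hp : p.Prime) [hq : Fact q.Prime] (hpq : p ≠ q) [Module (ZMod q) V]
    (ρ : G →* Module.End (ZMod q) V)
    (N : Subgroup G) [hN : N.Normal] (hcomm : ∀ a ∈ N, ∀ b ∈ N, a * b = b * a)
    (hexp : ∀ a ∈ N, a ^ p = 1) (hself : ∀ b, (∀ n ∈ N, b * n = n * b) → b ∈ N)
    (v₀ : V) (hspan : ∀ U : Submodule (ZMod q) V, (∀ n ∈ N, ρ n v₀ ∈ U) → U = ⊤)
    (hfaith : ∀ n ∈ N, ρ n = 1 → n = 1)
    (hcard : Nat.card V ∣ Nat.card G) : Subsingleton V := by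
  classical
  let k := AlgebraicClosure (ZMod q)
  have : CharP k q := charP_of_injective_algebraMap (algebraMap (ZMod q) k).injective q
  let W := V →ₗ[ZMod q] k
  let T : N → Module.End k W := fun n =>
    { toFun := fun φ => φ.comp (ρ n), map_add' := fun _ _ => rfl, map_smul' := fun _ _ => rfl }
  have hTapp : ∀ n φ v, T n φ v = φ (ρ n v) := fun _ _ _ => rfl
  -- the characters of `N` that occur in the dual of `V`
  let S := {χ : N →* k // ∃ φ : W, φ ≠ 0 ∧ ∀ (n : N) v, φ (ρ n v) = χ n * φ v}
  choose Φ hΦ0 hΦ using fun χ : S => χ.2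
  -- a functional in a character space is determined by its value at the cyclic vector
  have hLI : LinearIndependent k Φ := by
    let ev : W →ₗ[k] (N → k) :=
      { toFun := fun φ n => φ (ρ n v₀), map_add' := fun _ _ => rfl, map_smul' := fun _ _ => rfl }
    have h0 : ∀ χ : S, Φ χ v₀ ≠ 0 := by
      intro χ h
      apply hΦ0 χ
      have := hspan (LinearMap.ker (Φ χ)) (fun n hn => by
        rw [LinearMap.mem_ker, hΦ χ ⟨n, hn⟩ v₀, h, mul_zero])
      exact LinearMap.ker_eq_top.1 this
    refine LinearIndependent.of_comp ev ?_
    have h1 := (linearIndependent_monoidHom N k).comp (fun χ : S => χ.1) Subtype.val_injective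
    have h2 := h1.units_smul (fun χ : S => Units.mk0 _ (h0 χ))
    have h3 : ev ∘ Φ = (fun χ : S => Units.mk0 _ (h0 χ)) •
        ((fun f : N →* k => (f : N → k)) ∘ fun χ : S => χ.1) := by
      funext χ n
      change Φ χ (ρ n v₀) = Φ χ v₀ * χ.1 n
      rw [hΦ, mul_comm]
    rw [h3]
    exact h2
  have hSfin : Finite S := hLI.finite
  have hSc : Nat.card S ≤ Module.finrank (ZMod q) V := by
    have := Fintype.ofFinite S
    rw [Nat.card_eq_fintype_card, ← Module.finrank_linearMap_self (ZMod q) k V]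
    exact hLI.fintype_card_le_finrank
  -- an element of `N` in the kernel of all the characters in `S` is trivial
  have hsep : ∀ u : N, (∀ χ : S, χ.1 u = 1) → u = 1 := by
    intro u hu
    by_contra hu1
    have h1 : ρ u ≠ 1 := fun h => hu1 (Subtype.ext (hfaith u u.2 h))
    obtain ⟨v, hv⟩ : ∃ v, ρ u v ≠ v := by
      by_contra! h
      exact h1 (LinearMap.ext h)
    obtain ⟨f, hf⟩ : ∃ f : Module.Dual (ZMod q) V, f (ρ u v - v) ≠ 0 := by
      by_contra! h
      exact hv (sub_eq_zero.1 ((Module.forall_dual_apply_eq_zero_iff (ZMod q) _).1 h))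
    let ψ₀ : W := (Algebra.linearMap (ZMod q) k).comp f
    have hψ₀ : ψ₀ (ρ u v - v) ≠ 0 := by
      change algebraMap (ZMod q) k (f _) ≠ 0
      exact (map_ne_zero _).2 hf
    have hTT : ∀ i j x, T i (T j x) = T j (T i x) := by
      intro i j x
      ext v
      change x (ρ j (ρ i v)) = x (ρ i (ρ j v))
      rw [← Module.End.mul_apply, ← Module.End.mul_apply, ← map_mul, ← map_mul,
        hcomm i i.2 j j.2]
    obtain ⟨φ, ⟨ψ, rfl⟩, hφ0, hφ⟩ := joint_eigenvector T hTT (LinearMap.range (T u - 1)) (by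
      rw [Submodule.ne_bot_iff]
      refine ⟨(T u - 1) ψ₀, ⟨ψ₀, rfl⟩, fun h => hψ₀ ?_⟩
      have := LinearMap.congr_fun h v
      rw [map_sub]
      exact this) (by
      rintro i _ ⟨ψ, rfl⟩
      refine ⟨T i ψ, ?_⟩
      simp only [LinearMap.sub_apply, Module.End.one_apply, map_sub]
      rw [hTT])
    choose μ hμ using hφ
    set φ := (T u - 1) ψ with hφdef
    have hμ' : ∀ (n : N) v, φ (ρ n v) = μ n * φ v := fun n v => LinearMap.congr_fun (hμ n) v
    obtain ⟨w, hw⟩ : ∃ w, φ w ≠ 0 := by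
      by_contra! h
      exact hφ0 (LinearMap.ext h)
    let χ : N →* k :=
      { toFun := μ
        map_one' := by
          have := hμ' 1 w
          rw [Subgroup.coe_one, map_one, Module.End.one_apply] at this
          exact mul_right_cancel₀ hw (by rw [← this, one_mul])
        map_mul' := fun a b => by
          have := hμ' (a * b) w
          rw [Subgroup.coe_mul, map_mul, Module.End.mul_apply, hμ', hμ'] at this
          exact mul_right_cancel₀ hw (by rw [← this, mul_assoc]) }
    have hχu : μ u = 1 := hu ⟨χ, φ, hφ0, hμ'⟩
    have hfix : ∀ v, φ (ρ u v) = φ v := fun v => by rw [hμ', hχu, one_mul]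
    have hφv : ∀ v, φ v = ψ (ρ u v) - ψ v := fun _ => rfl
    -- `u` has order `p` but acts unipotently on `ψ`, which is impossible in characteristic `q ≠ p`
    have hpow : ∀ (i : ℕ) v, φ ((ρ u ^ i) v) = φ v := by
      intro i
      induction i with
      | zero => intro v; rw [pow_zero, Module.End.one_apply]
      | succ i ih => intro v; rw [pow_succ, Module.End.mul_apply, ih, hfix]
    have hsum : ∀ (i : ℕ) v, ψ ((ρ u ^ i) v) = ψ v + i * φ v := by
      intro i v
      induction i with
      | zero => rw [pow_zero, Module.End.one_apply, Nat.cast_zero, zero_mul, add_zero]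
      | succ i ih =>
        have h2 := hφv ((ρ u ^ i) v)
        rw [hpow] at h2
        rw [pow_succ', Module.End.mul_apply]
        push_cast
        linear_combination ih - h2
    have h3 := hsum p w
    rw [← map_pow, hexp u u.2, map_one, Module.End.one_apply, left_eq_add, mul_eq_zero] at h3
    rcases h3 with h3 | h3
    · rw [CharP.cast_eq_zero_iff k q] at h3
      exact hpq ((Nat.prime_dvd_prime_iff_eq hq.out hp).1 h3).symm
    · exact hw h3
  -- the conjugation action on `S`
  let act : G → S → S := fun b χ => ⟨χ.1.comp (MulAut.conjNormal b⁻¹).toMonoidHom, by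
    refine ⟨(Φ χ).comp (ρ b⁻¹), ?_, ?_⟩
    · intro h
      apply hΦ0 χ
      ext v
      have := LinearMap.congr_fun h (ρ b v)
      rw [LinearMap.comp_apply, ← Module.End.mul_apply, ← map_mul, inv_mul_cancel, map_one] at this
      exact this
    · intro (n : N) v
      have h := hΦ χ (MulAut.conjNormal b⁻¹ n) (ρ b⁻¹ v)
      rw [← Module.End.mul_apply, ← map_mul, MulAut.conjNormal_apply] at h
      rw [inv_inv, mul_assoc, mul_inv_cancel, mul_one] at h
      rw [LinearMap.comp_apply, LinearMap.comp_apply, ← Module.End.mul_apply, ← map_mul]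
      exact h⟩
  have hact : ∀ b χ n, (act b χ).1 n = χ.1 (MulAut.conjNormal b⁻¹ n) := fun _ _ _ => rfl
  let f : G →* Equiv.Perm S := MonoidHom.toHomPerm
    { toFun := act
      map_one' := by
        funext χ
        refine Subtype.ext (MonoidHom.ext fun n => ?_)
        rw [hact, inv_one, map_one]; rfl
      map_mul' := fun a b => by
        funext χ
        refine Subtype.ext (MonoidHom.ext fun n => ?_)
        change (act (a * b) χ).1 n = (act a (act b χ)).1 n
        rw [hact, hact, hact, mul_inv_rev, map_mul]; rfl }
  have hker : f.ker ≤ N := by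
    intro b hb
    refine hself b fun n hn => ?_
    have hb' : ∀ χ : S, act b χ = χ := fun χ => Equiv.congr_fun (MonoidHom.mem_ker.1 hb) χ
    have h1 := hsep (MulAut.conjNormal b⁻¹ ⟨n, hn⟩ * (⟨n, hn⟩ : N)⁻¹) (fun χ => by
      have h2 := hact b χ ⟨n, hn⟩
      rw [hb'] at h2
      rw [map_mul, ← h2, ← map_mul, mul_inv_cancel, map_one])
    have h3 := congrArg Subtype.val (mul_inv_eq_one.1 h1)
    rw [MulAut.conjNormal_apply, inv_inv] at h3
    change b⁻¹ * n * b = n at h3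
    nth_rw 1 [← h3]
    group
  have hkp : Nat.Coprime q (Nat.card f.ker) := by
    rw [Nat.Prime.coprime_iff_not_dvd hq.out]
    intro hd
    obtain ⟨x, hx⟩ := exists_prime_orderOf_dvd_card' q hd
    have h1 : (x : G) ^ p = 1 := hexp _ (hker x.2)
    have h2 : q ∣ p := by
      rw [← hx]
      exact orderOf_dvd_of_pow_eq_one (Subtype.ext (by simpa using h1))
    exact hpq ((Nat.prime_dvd_prime_iff_eq hq.out hp).1 h2).symm
  set d := Module.finrank (ZMod q) V with hd
  have hV : Nat.card V = q ^ d := by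
    rw [Module.natCard_eq_pow_finrank (K := ZMod q), Nat.card_zmod]
  have h1 : q ^ d ∣ d.factorial := by
    rw [← hV]
    have h2 : Nat.card f.range ∣ d.factorial := by
      refine (f.range.card_subgroup_dvd_card).trans ?_
      rw [Nat.card_perm]
      exact Nat.factorial_dvd_factorial hSc
    refine dvd_trans ?_ h2
    rw [← Subgroup.index_ker]
    rw [← f.ker.card_mul_index] at hcard
    refine Nat.Coprime.dvd_of_dvd_mul_left ?_ hcard
    rw [hV]
    exact hkp.pow_left d
  -- Legendre's bound on the exponent of `q` in `d!`
  have hd0 : d = 0 := by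
    by_contra h0
    have h2 := sub_one_mul_padicValNat_factorial_lt_of_ne_zero (p := q) h0
    have h3 := (padicValNat_dvd_iff_le (Nat.factorial_ne_zero d)).1 h1
    have h4 := hq.out.two_le
    have h5 : 1 * d ≤ (q - 1) * padicValNat q d.factorial := Nat.mul_le_mul (by omega) h3
    omega
  rw [← Module.finrank_eq_zero_iff_of_free (ZMod q)]
  exact hd0

/-- `char_count` for an action by additive endomorphisms on a group of exponent `q`. -/
theorem char_count_add {G V : Type} [Group G] [Finite G] [AddCommGroup V] [Finite V] (p q : ℕ)
    (hp : p.Prime) (hq : q.Prime) (hpq : p ≠ q) (hV : ∀ v : V, q • v = 0)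
    (τ : G →* AddMonoid.End V) (N : Subgroup G) [N.Normal]
    (hcomm : ∀ a ∈ N, ∀ b ∈ N, a * b = b * a) (hexp : ∀ a ∈ N, a ^ p = 1)
    (hself : ∀ b, (∀ n ∈ N, b * n = n * b) → b ∈ N) (v₀ : V)
    (hspan : ∀ U : AddSubgroup V, (∀ n ∈ N, τ n v₀ ∈ U) → U = ⊤)
    (hfaith : ∀ n ∈ N, τ n = 1 → n = 1) (hcard : Nat.card V ∣ Nat.card G) : Subsingleton V := by
  have := Fact.mk hq
  let _ : Module (ZMod q) V := AddCommGroup.zmodModule (n := q) hV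
  let ρ : G →* Module.End (ZMod q) V :=
    { toFun := fun g => AddMonoidHom.toZModLinearMap q (τ g)
      map_one' := LinearMap.ext fun v => DFunLike.congr_fun (map_one τ) v
      map_mul' := fun g h => LinearMap.ext fun v => DFunLike.congr_fun (map_mul τ g h) v }
  refine char_count p q hp hpq ρ N hcomm hexp hself v₀ ?_ ?_ hcard
  · intro U hU
    have h := hspan U.toAddSubgroup hU
    rw [eq_top_iff]
    intro v _
    exact (h ▸ AddSubgroup.mem_top v : v ∈ U.toAddSubgroup)
  · intro n hn h
    exact hfaith n hn (AddMonoidHom.ext fun v => DFunLike.congr_fun h v)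

/-! ### Primitive actions and abelian groups with operators -/

/-- A map whose fibres form an invariant equivalence relation on a primitive set is injective or
constant. -/
theorem inj_or_const {G X V : Type*} [Group G] [MulAction G X] [MulAction.IsPreprimitive G X]
    (f : X → V) (hf : ∀ (g : G) x y, f x = f y → f (g • x) = f (g • y)) :
    Function.Injective f ∨ ∀ x y, f x = f y := by
  by_cases h : ∃ x, {y | f y = f x} = Set.univ
  · right
    obtain ⟨x, hx⟩ := h
    have h1 : ∀ y, f y = f x := fun y => by
      have : y ∈ {y | f y = f x} := hx ▸ Set.mem_univ y
      exact this
    intro a b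
    rw [h1 a, h1 b]
  · left
    push Not at h
    intro x y hxy
    have hb : MulAction.IsBlock G {z | f z = f x} := by
      rw [MulAction.isBlock_iff_smul_eq_of_mem]
      intro g a ha hga
      have ha' : f a = f x := ha
      have hga' : f (g • a) = f x := hga
      ext z
      rw [Set.mem_smul_set_iff_inv_smul_mem]
      change f (g⁻¹ • z) = f x ↔ f z = f x
      constructor
      · intro hz
        have := hf g _ _ (hz.trans ha'.symm)
        rw [smul_inv_smul] at this
        rw [this, hga']
      · intro hz
        have := hf g⁻¹ _ _ (hz.trans hga'.symm)
        rw [inv_smul_smul] at this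
        rw [this, ha']
    rcases hb.subsingleton_or_eq_univ with h1 | h1
    · exact h1 rfl hxy.symm
    · exact (h x h1).elim

theorem pretransitive_of_normal {G X : Type*} [Group G] [MulAction G X] [FaithfulSMul G X]
    [MulAction.IsPreprimitive G X] (N : Subgroup G) [N.Normal] (hN : N ≠ ⊥) (x y : X) :
    ∃ n ∈ N, n • x = y := by
  have h1 : MulAction.fixedPoints N X ≠ Set.univ := by
    intro h
    apply hN
    rw [eq_bot_iff]
    intro n hn
    rw [Subgroup.mem_bot]
    refine eq_of_smul_eq_smul (α := X) fun x => ?_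
    have : x ∈ MulAction.fixedPoints N X := h ▸ Set.mem_univ x
    rw [one_smul]
    exact this ⟨n, hn⟩
  have := MulAction.IsQuasiPreprimitive.isPretransitive_of_normal h1
  obtain ⟨n, hn⟩ := MulAction.exists_smul_eq N x y
  exact ⟨n, n.2, hn⟩

/-- A transitive abelian subgroup of a permutation group is its own centralizer. -/
theorem self_centralizing {G X : Type*} [Group G] [MulAction G X] [FaithfulSMul G X] [Nonempty X]
    (N : Subgroup G) (hcomm : ∀ a ∈ N, ∀ b ∈ N, a * b = b * a)
    (htr : ∀ x y : X, ∃ n ∈ N, n • x = y) (b : G) (hb : ∀ n ∈ N, b * n = n * b) : b ∈ N := by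
  obtain ⟨x⟩ : Nonempty X := inferInstance
  obtain ⟨m, hm, hmx⟩ := htr x (b • x)
  have : b = m := by
    refine eq_of_smul_eq_smul (α := X) fun y => ?_
    obtain ⟨n, hn, rfl⟩ := htr x y
    rw [smul_smul, hb n hn, mul_smul, ← hmx, smul_smul, smul_smul, hcomm n hn m hm]
  rwa [this]

theorem card_of_abelian_transitive {G X : Type*} [Group G] [MulAction G X] [FaithfulSMul G X]
    [Nonempty X] (N : Subgroup G) (hcomm : ∀ a ∈ N, ∀ b ∈ N, a * b = b * a)
    (htr : ∀ x y : X, ∃ n ∈ N, n • x = y) : Nat.card N = Nat.card X := by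
  obtain ⟨x⟩ : Nonempty X := inferInstance
  refine Nat.card_congr (Equiv.ofBijective (fun n : N => (n : G) • x) ⟨?_, ?_⟩)
  · intro a b hab
    refine Subtype.ext (eq_of_smul_eq_smul (α := X) fun y => ?_)
    obtain ⟨n, hn, rfl⟩ := htr x y
    have hab' : (a : G) • x = (b : G) • x := hab
    rw [smul_smul, smul_smul, hcomm a a.2 n hn, hcomm b b.2 n hn, mul_smul, mul_smul, hab']
  · intro y
    obtain ⟨n, hn, h⟩ := htr x y
    exact ⟨⟨n, hn⟩, h⟩

/-- The action induced on the quotient by an invariant subgroup. -/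
def quotAct {G A : Type*} [Group G] [AddCommGroup A] [DistribMulAction G A] (B : AddSubgroup A)
    (hB : ∀ (g : G), ∀ a ∈ B, g • a ∈ B) : G →* AddMonoid.End (A ⧸ B) where
  toFun g := QuotientAddGroup.map B B (DistribSMul.toAddMonoidHom A g) (hB g)
  map_one' := by
    refine AddMonoidHom.ext fun v => ?_
    induction v using QuotientAddGroup.induction_on with
    | H a => exact congrArg _ (one_smul G a)
  map_mul' g h := by
    refine AddMonoidHom.ext fun v => ?_
    induction v using QuotientAddGroup.induction_on with
    | H a => exact congrArg _ (mul_smul g h a)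

theorem quotAct_mk {G A : Type*} [Group G] [AddCommGroup A] [DistribMulAction G A]
    (B : AddSubgroup A) (hB : ∀ (g : G), ∀ a ∈ B, g • a ∈ B) (g : G) (a : A) :
    quotAct B hB g (a : A ⧸ B) = ((g • a : A) : A ⧸ B) := rfl

theorem smul_eq_zero_of_coprime {A : Type*} [AddCommGroup A] {m n : ℕ} (h : Nat.Coprime m n)
    {a : A} (hm : m • a = 0) (hn : n • a = 0) : a = 0 := by
  rw [← AddMonoid.addOrderOf_eq_one_iff, ← Nat.dvd_one, ← h]
  exact Nat.dvd_gcd (addOrderOf_dvd_of_nsmul_eq_zero hm) (addOrderOf_dvd_of_nsmul_eq_zero hn)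

/-- The `m`-torsion of an abelian group. -/
abbrev tors (A : Type*) [AddCommGroup A] (m : ℕ) : AddSubgroup A := (nsmulAddMonoidHom m).ker

theorem mem_tors {A : Type*} [AddCommGroup A] {m : ℕ} {a : A} : a ∈ tors A m ↔ m • a = 0 :=
  Iff.rfl

theorem not_dvd_card_tors {A : Type*} [AddCommGroup A] [Finite A] {p m : ℕ} (hp : p.Prime)
    (h : ¬ p ∣ m) : ¬ p ∣ Nat.card (tors A m) := by
  intro hd
  have := Fact.mk hp
  obtain ⟨x, hx⟩ := exists_prime_addOrderOf_dvd_card' p hd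
  have h1 : p • x = 0 := by rw [← hx]; exact addOrderOf_nsmul_eq_zero x
  have h2 : m • x = 0 := Subtype.ext (mem_tors.1 x.2)
  have h3 := smul_eq_zero_of_coprime ((Nat.Prime.coprime_iff_not_dvd hp).2 h) h1 h2
  rw [h3, addOrderOf_zero] at hx
  exact hp.one_lt.ne hx

/-! ### Bijective cocycles on primitive groups -/

section Brace

variable {G A : Type} [Group G] [Finite G] [AddCommGroup A] [Finite A] [DistribMulAction G A]

/-- A finite group that carries a bijective cocycle with values in an abelian group is solvable:
the cocycle sends the part of `A` of order prime to `p` onto a `p`-complement. -/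
theorem cocycle_solvable (ev : A → G) (hev : Function.Bijective ev)
    (hadd : ∀ a b, ev (a + b) = ev (ev a • b) * ev a) : Group.IsSolvable G := by
  have h0 : ev 0 = 1 := by
    have := hadd 0 0
    rw [smul_zero, add_zero] at this
    exact right_eq_mul.1 this
  have hmul : ∀ c a, ev c * ev a = ev (a + (ev a)⁻¹ • c) := fun c a => by
    rw [hadd, smul_inv_smul]
  refine hall_converse _ G rfl fun p hp => ?_
  obtain ⟨e, m, hm, hem⟩ := Nat.exists_eq_pow_mul_and_not_dvd (Nat.card_pos (α := A)).ne' p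
    hp.ne_one
  have hst : ∀ (g : G), ∀ a ∈ tors A m, g • a ∈ tors A m := by
    intro g a ha
    rw [mem_tors] at ha ⊢
    rw [smul_comm, ha, smul_zero]
  let H : Subgroup G :=
    { carrier := ev '' (tors A m)
      mul_mem' := by
        rintro _ _ ⟨c, hc, rfl⟩ ⟨a, ha, rfl⟩
        exact ⟨_, (tors A m).add_mem ha (hst _ _ hc), (hmul c a).symm⟩
      one_mem' := ⟨0, (tors A m).zero_mem, h0⟩
      inv_mem' := by
        rintro _ ⟨a, ha, rfl⟩
        refine ⟨-(ev a • a), (tors A m).neg_mem (hst _ _ ha), ?_⟩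
        rw [eq_inv_iff_mul_eq_one, hmul, smul_neg, inv_smul_smul, add_neg_cancel, h0] }
  have hH : Nat.card H = Nat.card (tors A m) :=
    (Nat.card_congr (Equiv.Set.image ev _ hev.injective)).symm
  have hGA : Nat.card G = Nat.card A := (Nat.card_congr (Equiv.ofBijective ev hev)).symm
  refine ⟨H, by rw [hH]; exact not_dvd_card_tors hp hm, ?_⟩
  have hidx : H.index = (tors A m).index := by
    have h1 := H.card_mul_index
    rw [hGA, ← (tors A m).card_mul_index, hH] at h1
    exact Nat.eq_of_mul_eq_mul_left Nat.card_pos h1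
  rw [hidx]
  refine ⟨_, Nat.eq_prime_pow_of_unique_prime_dvd AddSubgroup.FiniteIndex.index_ne_zero ?_⟩
  intro r hr hrd
  have := Fact.mk hr
  obtain ⟨z, hz⟩ := exists_prime_addOrderOf_dvd_card' (G := A ⧸ tors A m) r hrd
  have hz1 : p ^ e • z = 0 := by
    induction z using QuotientAddGroup.induction_on with
    | H a =>
      rw [← QuotientAddGroup.mk_nsmul, QuotientAddGroup.eq_zero_iff, mem_tors, smul_smul,
        mul_comm, ← hem]
      exact card_nsmul_eq_zero'
  have h2 : r ∣ p ^ e := hz ▸ addOrderOf_dvd_of_nsmul_eq_zero hz1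
  exact (Nat.prime_dvd_prime_iff_eq hr hp).1 (hr.dvd_of_dvd_pow h2)

variable {X : Type} [MulAction G X] [FaithfulSMul G X] [MulAction.IsPreprimitive G X]
  [Nontrivial X]

/-- An equivariant map `E` from a primitive set to `A` whose image generates `A` is constant modulo
`q A`, for every prime `q` other than the exponent of the abelian normal subgroup `N`. -/
theorem sub_mem_nsmul_range (p q : ℕ) (hp : p.Prime) (hq : q.Prime) (hpq : p ≠ q)
    (N : Subgroup G) [N.Normal] (hN : N ≠ ⊥) (hcomm : ∀ a ∈ N, ∀ b ∈ N, a * b = b * a)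
    (hexp : ∀ a ∈ N, a ^ p = 1) (hcard : Nat.card A = Nat.card G) (E : X → A)
    (hE : ∀ (g : G) x, g • E x = E (g • x)) (hspan : AddSubgroup.closure (Set.range E) = ⊤)
    (x y : X) : E x - E y ∈ (nsmulAddMonoidHom (α := A) q).range := by
  set B := (nsmulAddMonoidHom (α := A) q).range with hB
  have hst : ∀ (g : G), ∀ a ∈ B, g • a ∈ B := by
    rintro g _ ⟨a, rfl⟩
    refine ⟨g • a, ?_⟩
    change q • (g • a) = g • (q • a)
    rw [smul_comm]
  have hρ : ∀ g x, quotAct B hst g ((E x : A) : A ⧸ B) = ((E (g • x) : A) : A ⧸ B) :=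
    fun g x => by rw [← hE, quotAct_mk]
  have hdich := inj_or_const (G := G) (fun x => ((E x : A) : A ⧸ B)) (by
    intro g x y hxy
    have h2 : ((E x : A) : A ⧸ B) = ((E y : A) : A ⧸ B) := hxy
    change ((E (g • x) : A) : A ⧸ B) = ((E (g • y) : A) : A ⧸ B)
    rw [← hρ, h2, hρ])
  rcases hdich with hinj | hconst
  · exfalso
    obtain ⟨x0⟩ : Nonempty X := inferInstance
    have htr := pretransitive_of_normal (X := X) N hN
    have hsub : Subsingleton (A ⧸ B) := by
      refine char_count_add p q hp hq hpq ?_ (quotAct B hst) N hcomm hexp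
        (self_centralizing (X := X) N hcomm htr) (E x0 : A ⧸ B) ?_ ?_ ?_
      · intro v
        induction v using QuotientAddGroup.induction_on with
        | H a =>
          rw [← QuotientAddGroup.mk_nsmul, QuotientAddGroup.eq_zero_iff]
          exact ⟨a, rfl⟩
      · intro U hU
        have h1 : (⊤ : AddSubgroup A) ≤ U.comap (QuotientAddGroup.mk' B) := by
          rw [← hspan, AddSubgroup.closure_le]
          rintro _ ⟨z, rfl⟩
          obtain ⟨n, hn, rfl⟩ := htr x0 z
          have := hU n hn
          rwa [hρ] at this
        rw [eq_top_iff]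
        intro v _
        induction v using QuotientAddGroup.induction_on with
        | H a => exact h1 (AddSubgroup.mem_top a)
      · intro n hn h1
        refine eq_of_smul_eq_smul (α := X) fun z => hinj ?_
        change ((E (n • z) : A) : A ⧸ B) = ((E ((1 : G) • z) : A) : A ⧸ B)
        rw [← hρ, h1, one_smul]; rfl
      · rw [← hcard]
        exact AddSubgroup.card_quotient_dvd_card B
    obtain ⟨a, b, hab⟩ := exists_pair_ne X
    exact hab (hinj (Subsingleton.elim _ _))
  · rw [← neg_sub, neg_sub, ← QuotientAddGroup.eq_iff_sub_mem]
    exact hconst x y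

/-- A group with a bijective cocycle `ev : A → G` does not act faithfully and primitively on a set
`X` that embeds equivariantly into `A` with generating image.

With `p` the exponent of an abelian normal subgroup and `K` the `p`-part of `A`, the map `E` is
injective or constant modulo `K`. In the first case `A / K` is cyclic and `G` is an abelian
`p`-group. In the second case `G` acts trivially on `A / K`, so `K` corresponds to a normal
`p`-subgroup `P` of `G`. The center of `P` is regular on `X`, whence `|K| = |P| = |X|`, and a
multiple of `E` maps `X` bijectively and equivariantly onto `K`; but `G` fixes `0` in `K`. -/
theorem no_faithful_primitive (ev : A → G) (hev : Function.Bijective ev)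
    (hadd : ∀ a b, ev (a + b) = ev (ev a • b) * ev a) (E : X → A)
    (hE : ∀ (g : G) x, g • E x = E (g • x)) (hspan : AddSubgroup.closure (Set.range E) = ⊤)
    (hinj : Function.Injective E) : False := by
  have hsolv := cocycle_solvable ev hev hadd
  have hcard : Nat.card A = Nat.card G := Nat.card_congr (Equiv.ofBijective ev hev)
  obtain ⟨x0, x1, hx01⟩ := exists_pair_ne X
  have hGn : Nontrivial G := by
    obtain ⟨g, hg⟩ := MulAction.exists_smul_eq G x0 x1
    refine ⟨g, 1, ?_⟩
    rintro rfl
    rw [one_smul] at hg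
    exact hx01 hg
  obtain ⟨p, N, hp, hNn, hN, hcomm, hexp⟩ := exists_elementary_normal G
  have := Fact.mk hp
  have htr := pretransitive_of_normal (X := X) N hN
  obtain ⟨e, m, hm, hem⟩ := Nat.exists_eq_pow_mul_and_not_dvd (Nat.card_pos (α := A)).ne' p
    hp.ne_one
  have hcop : Nat.Coprime m (p ^ e) :=
    Nat.Coprime.symm (Nat.Coprime.pow_left _ ((Nat.Prime.coprime_iff_not_dvd hp).2 hm))
  have hmK : ∀ a : A, m • a ∈ tors A (p ^ e) := fun a => by
    rw [mem_tors, smul_smul, ← hem]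
    exact card_nsmul_eq_zero'
  set K := tors A (p ^ e) with hK
  have hst : ∀ (g : G), ∀ a ∈ K, g • a ∈ K := by
    intro g a ha
    rw [hK, mem_tors] at ha ⊢
    rw [smul_comm, ha, smul_zero]
  have hsmul : ∀ (g : G) (k : ℤ) (a : A), g • (k • a) = k • (g • a) := fun g k a =>
    map_zsmul (DistribSMul.toAddMonoidHom A g) k a
  -- modulo the `p`-primary part, the image of a single point generates
  have hgen : ∀ a : A, ∃ k : ℤ, a - k • E x0 ∈ K := by
    set S := AddSubgroup.zmultiples (E x0) ⊔ K with hS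
    have hSt : S = ⊤ := by
      rw [← AddSubgroup.index_eq_one]
      by_contra hne
      obtain ⟨q, hq, hqd⟩ := Nat.exists_prime_and_dvd hne
      have := Fact.mk hq
      obtain ⟨z, hz⟩ := exists_prime_addOrderOf_dvd_card' (G := A ⧸ S) q hqd
      have hz1 : m • z = 0 := by
        induction z using QuotientAddGroup.induction_on with
        | H a =>
          rw [← QuotientAddGroup.mk_nsmul, QuotientAddGroup.eq_zero_iff]
          exact (le_sup_right : K ≤ S) (hmK a)
      have hqm : q ∣ m := hz ▸ addOrderOf_dvd_of_nsmul_eq_zero hz1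
      have hpq : p ≠ q := by rintro rfl; exact hm hqm
      have hsurj : Function.Surjective (nsmulAddMonoidHom (α := A ⧸ S) q) := by
        have h1 : (⊤ : AddSubgroup A) ≤
            (nsmulAddMonoidHom (α := A ⧸ S) q).range.comap (QuotientAddGroup.mk' S) := by
          rw [← hspan, AddSubgroup.closure_le]
          rintro _ ⟨z, rfl⟩
          obtain ⟨a, ha⟩ := sub_mem_nsmul_range p q hp hq hpq N hN hcomm hexp hcard E hE hspan z x0
          refine ⟨(a : A ⧸ S), ?_⟩
          change q • (a : A ⧸ S) = (E z : A ⧸ S)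
          rw [← QuotientAddGroup.mk_nsmul, QuotientAddGroup.eq_iff_sub_mem]
          have ha' : q • a = E z - E x0 := ha
          rw [ha', sub_sub_cancel_left]
          exact S.neg_mem ((le_sup_left : _ ≤ S) (AddSubgroup.mem_zmultiples _))
        intro v
        induction v using QuotientAddGroup.induction_on with
        | H a => exact h1 (AddSubgroup.mem_top a)
      have hi := Finite.injective_iff_surjective.2 hsurj
      have : z = 0 := hi (by
        change q • z = q • 0
        rw [smul_zero, ← hz, addOrderOf_nsmul_eq_zero])
      rw [this, addOrderOf_zero] at hz
      exact hq.one_lt.ne hz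
    intro a
    have ha : a ∈ S := hSt ▸ AddSubgroup.mem_top a
    obtain ⟨b, hb, c, hc, rfl⟩ := AddSubgroup.mem_sup.1 ha
    obtain ⟨k, rfl⟩ := AddSubgroup.mem_zmultiples_iff.1 hb
    exact ⟨k, by simpa using hc⟩
  have hdich := inj_or_const (G := G) (fun x => ((E x : A) : A ⧸ K)) (by
    intro g x y hxy
    have h2 : ((E x : A) : A ⧸ K) = ((E y : A) : A ⧸ K) := hxy
    change ((E (g • x) : A) : A ⧸ K) = ((E (g • y) : A) : A ⧸ K)
    rw [QuotientAddGroup.eq_iff_sub_mem] at h2 ⊢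
    rw [← hE, ← hE, ← smul_sub]
    exact hst g _ h2)
  -- if `E` is injective modulo `K`, then `G` acts on `A ⧸ K` by scalars, so it is commutative
  have hconst : ∀ x y, E x - E y ∈ K := by
    rcases hdich with hi | hc
    · exfalso
      have hact : ∀ g : G, ∃ k : ℤ, ∀ a : A, g • a - k • a ∈ K := by
        intro g
        obtain ⟨k, hk⟩ := hgen (g • E x0)
        refine ⟨k, fun a => ?_⟩
        obtain ⟨l, hl⟩ := hgen a
        have e1 : g • a - k • a = g • (a - l • E x0) + l • (g • E x0 - k • E x0)
            - k • (a - l • E x0) := by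
          rw [smul_sub, smul_sub, smul_sub, hsmul, smul_comm k l]
          abel
        rw [e1]
        exact K.sub_mem (K.add_mem (hst g _ hl) (K.zsmul_mem hk l)) (K.zsmul_mem hl k)
      have hab : ∀ g h : G, g * h = h * g := by
        intro g h
        refine eq_of_smul_eq_smul (α := X) fun z => hi ?_
        change ((E ((g * h) • z) : A) : A ⧸ K) = ((E ((h * g) • z) : A) : A ⧸ K)
        rw [QuotientAddGroup.eq_iff_sub_mem, ← hE, ← hE, mul_smul, mul_smul]
        obtain ⟨k, hk⟩ := hact g
        obtain ⟨l, hl⟩ := hact h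
        have e1 : g • h • E z - h • g • E z = (g • (h • E z) - k • (h • E z))
            + k • (h • E z - l • E z) - (h • (g • E z) - l • (g • E z))
            - l • (g • E z - k • E z) := by
          rw [smul_sub, smul_sub, smul_comm k l]
          abel
        rw [e1]
        exact K.sub_mem (K.sub_mem (K.add_mem (hk _) (K.zsmul_mem (hl _) k)) (hl _))
          (K.zsmul_mem (hk _) l)
      have hpG : IsPGroup p G := fun g =>
        ⟨1, by
          rw [pow_one]
          exact hexp g (self_centralizing (X := X) N hcomm htr g fun n _ => hab g n)⟩
      obtain ⟨n, hn⟩ := IsPGroup.iff_card.1 hpG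
      have hm1 : m = 1 := by
        refine Nat.eq_one_of_dvd_coprimes (a := m) (b := p ^ n) ?_ dvd_rfl ?_
        · exact Nat.Coprime.symm
            (Nat.Coprime.pow_left _ ((Nat.Prime.coprime_iff_not_dvd hp).2 hm))
        · rw [← hn, ← hcard, hem]
          exact dvd_mul_left _ _
      refine hx01 (hi ((QuotientAddGroup.eq_iff_sub_mem).2 ?_))
      have := hmK (E x0 - E x1)
      rwa [hm1, one_smul] at this
    · exact fun x y => (QuotientAddGroup.eq_iff_sub_mem).1 (hc x y)
  have htriv : ∀ (g : G) (a : A), g • a - a ∈ K := by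
    intro g a
    have ha : a ∈ AddSubgroup.closure (Set.range E) := hspan ▸ AddSubgroup.mem_top a
    induction ha using AddSubgroup.closure_induction with
    | mem a ha =>
      obtain ⟨z, rfl⟩ := ha
      rw [hE]
      exact hconst _ _
    | zero => rw [smul_zero, sub_zero]; exact K.zero_mem
    | add a b _ _ ha hb =>
      rw [smul_add, add_sub_add_comm]
      exact K.add_mem ha hb
    | neg a _ ha =>
      rw [smul_neg, ← neg_sub', ]
      exact K.neg_mem ha
  let evE := Equiv.ofBijective ev hev
  have hmul : ∀ c a, ev c * ev a = ev (a + (ev a)⁻¹ • c) := fun c a => by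
    rw [hadd, smul_inv_smul]
  -- `G` acts trivially on `A ⧸ K`, so the inverse of the cocycle is a homomorphism modulo `K`
  let φ : G →* Multiplicative (A ⧸ K) := MonoidHom.mk'
    (fun g => Multiplicative.ofAdd ((evE.symm g : A) : A ⧸ K)) (by
      intro g h
      obtain ⟨c, rfl⟩ := hev.surjective g
      obtain ⟨a, rfl⟩ := hev.surjective h
      rw [hmul, ← ofAdd_add]
      congr 1
      have hs : ∀ a, evE.symm (ev a) = a := evE.symm_apply_apply
      rw [hs, hs, hs, ← QuotientAddGroup.mk_add, QuotientAddGroup.eq_iff_sub_mem]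
      have := htriv (ev a)⁻¹ c
      rwa [add_comm c a, add_sub_add_left_eq_sub])
  let P := φ.ker
  have hmemP : ∀ a, ev a ∈ P ↔ a ∈ K := by
    intro a
    rw [← QuotientAddGroup.eq_zero_iff]
    change Multiplicative.ofAdd ((evE.symm (evE a) : A) : A ⧸ K) = 1 ↔ _
    rw [evE.symm_apply_apply]
    exact ofAdd_eq_one
  have hcardP : Nat.card P = Nat.card K := by
    refine (Nat.card_congr (evE.subtypeEquiv fun a => ?_)).symm
    exact (hmemP a).symm
  have hKp : ∀ r, r.Prime → r ∣ Nat.card K → r = p := by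
    intro r hr hrd
    by_contra hne
    refine not_dvd_card_tors (A := A) hr (m := p ^ e) (fun h => hne ?_) hrd
    exact (Nat.prime_dvd_prime_iff_eq hr hp).1 (hr.dvd_of_dvd_pow h)
  have hPp : IsPGroup p P := by
    refine IsPGroup.of_card (n := (Nat.card K).primeFactorsList.length) ?_
    rw [hcardP]
    exact Nat.eq_prime_pow_of_unique_prime_dvd Nat.card_pos.ne' (hKp _)
  have hKn : Nontrivial K := by
    refine ⟨⟨E x0 - E x1, hconst _ _⟩, 0, fun h => hx01 (hinj ?_)⟩
    exact sub_eq_zero.1 (congrArg Subtype.val h)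
  have hPn : Nontrivial P := by
    rw [← Finite.one_lt_card_iff_nontrivial, hcardP]
    exact Finite.one_lt_card
  have hZn := hPp.center_nontrivial
  let M : Subgroup G := (Subgroup.center P).map P.subtype
  have hMb : M ≠ ⊥ := by
    intro h
    have h1 := (Subgroup.map_eq_bot_iff_of_injective _ P.subtype_injective).1 h
    exact (Subgroup.nontrivial_iff_ne_bot _).1 hZn h1
  have hMn : M.Normal := inferInstance
  have hMcent : ∀ a ∈ P, ∀ b ∈ M, a * b = b * a := by
    rintro a ha _ ⟨b, hb, rfl⟩
    exact congrArg Subtype.val (Subgroup.mem_center_iff.1 hb ⟨a, ha⟩)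
  have hMP : M ≤ P := Subgroup.map_subtype_le _
  have hMcomm : ∀ a ∈ M, ∀ b ∈ M, a * b = b * a := fun a ha => hMcent a (hMP ha)
  have hMtr := pretransitive_of_normal (X := X) M hMb
  have hPM : P = M := le_antisymm
    (fun a ha => self_centralizing (X := X) M hMcomm hMtr a (hMcent a ha)) hMP
  have hcX : Nat.card K = Nat.card X := by
    rw [← hcardP, hPM]
    exact card_of_abelian_transitive (X := X) M hMcomm hMtr
  have hXfin : Finite X := Finite.of_injective E hinj
  -- `m • E` is a bijection onto `K`, and the point over `0` contradicts transitivity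
  let f : X → K := fun x => ⟨m • E x, hmK _⟩
  have hfi : Function.Injective f := by
    intro x y hxy
    have h1 : m • E x = m • E y := congrArg Subtype.val hxy
    refine hinj (sub_eq_zero.1 (smul_eq_zero_of_coprime hcop (a := E x - E y) ?_ ?_))
    · rw [smul_sub, h1, sub_self]
    · exact mem_tors.1 (hconst x y)
  have hfs : Function.Surjective f := by
    have := (Nat.bijective_iff_injective_and_card f).2 ⟨hfi, hcX.symm⟩
    exact this.surjective
  obtain ⟨z, hz⟩ := hfs 0
  have hz0 : m • E z = 0 := congrArg Subtype.val hz
  have hall : ∀ y, f y = 0 := by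
    intro y
    obtain ⟨g, rfl⟩ := MulAction.exists_smul_eq G z y
    refine Subtype.ext ?_
    change m • E (g • z) = 0
    rw [← hE, smul_comm, hz0, smul_zero]
  exact hx01 (hfi ((hall x0).trans (hall x1).symm))

end Brace

/-! ### The brace of a cycle set -/

open CycleSet in
theorem isPreprimitive_of_primitive {Y : Type} (C : CycleSet Y) (hP : C.Primitive) :
    MulAction.IsPreprimitive C.G Y := by
  have : MulAction.IsPretransitive C.G Y := ⟨fun a b => by
    obtain ⟨g, hg, h⟩ := hP.1 a b
    exact ⟨⟨g, hg⟩, h⟩⟩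
  refine ⟨fun {S} hS => hP.2 S fun g hg => ?_⟩
  exact MulAction.isBlock_iff_smul_eq_or_disjoint.1 hS ⟨g, hg⟩

/-- The left multiplication `σ_x`, as an element of the permutation group `G(Y)`. -/
noncomputable def CycleSet.sig {Y : Type} (C : CycleSet Y) (x : Y) : C.G :=
  ⟨C.sigma x, Subgroup.subset_closure ⟨x, rfl⟩⟩

theorem CycleSet.sig_mul {Y : Type} (C : CycleSet Y) (u v : Y) :
    C.sig (C.sig u • v) * C.sig u = C.sig (C.sig v • u) * C.sig v :=
  Subtype.ext (Equiv.ext fun z => C.cyc u v z)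

/-- The permutation `g ↦ σ_{g x} g` of `G(Y)`. These permutations commute, and they
generate the additive group of the brace structure on `G(Y)`. -/
noncomputable def CycleSet.lam {Y : Type} [Finite Y] (C : CycleSet Y) (hnd : C.Nondeg) (x : Y) :
    Equiv.Perm C.G :=
  Equiv.ofBijective (fun g => C.sig (g • x) * g) (Finite.injective_iff_bijective.1 (by
    intro g h hgh
    have hgh' : C.sig (g • x) * g = C.sig (h • x) * h := hgh
    have h1 : C.op (g • x) (g • x) = C.op (h • x) (h • x) :=
      congrArg (fun k : C.G => k • x) hgh'
    have h2 : g • x = h • x := hnd.1 h1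
    rw [h2] at hgh'
    exact mul_left_cancel hgh'))

theorem CycleSet.lam_apply {Y : Type} [Finite Y] (C : CycleSet Y) (hnd : C.Nondeg) (x : Y)
    (g : C.G) : C.lam hnd x g = C.sig (g • x) * g := rfl

theorem CycleSet.lam_comm {Y : Type} [Finite Y] (C : CycleSet Y) (hnd : C.Nondeg) (x y : Y) :
    C.lam hnd x * C.lam hnd y = C.lam hnd y * C.lam hnd x := by
  refine Equiv.ext fun g => ?_
  rw [Equiv.Perm.mul_apply, Equiv.Perm.mul_apply, lam_apply, lam_apply, lam_apply, lam_apply,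
    mul_smul, mul_smul, ← mul_assoc, ← mul_assoc, sig_mul]

/-- `G` acts on the permutations of its underlying set through conjugation by right
multiplications. -/
def rightConj (G : Type) [Group G] : G →* MulAut (Equiv.Perm G) where
  toFun h := MulAut.conj (Equiv.mulRight h)⁻¹
  map_one' := by
    rw [show Equiv.mulRight (1 : G) = 1 from Equiv.ext fun g => mul_one g, inv_one, map_one]
  map_mul' h k := by
    rw [← map_mul, ← mul_inv_rev]
    congr 2
    exact Equiv.ext fun g => (mul_assoc g h k).symm

theorem rightConj_apply {G : Type} [Group G] (h : G) (a : Equiv.Perm G) (g : G) :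
    rightConj G h a g = a (g * h) * h⁻¹ := rfl

theorem CycleSet.rightConj_lam {Y : Type} [Finite Y] (C : CycleSet Y) (hnd : C.Nondeg) (x : Y)
    (h : C.G) : rightConj C.G h (C.lam hnd x) = C.lam hnd (h • x) := by
  refine Equiv.ext fun g => ?_
  rw [rightConj_apply, lam_apply, lam_apply, mul_smul, ← mul_assoc, mul_inv_cancel_right]

/-- A finite non-degenerate primitive cycle set with more than one element is trivial. The
permutations `lam x` generate an abelian group that is regular on `G(Y)`, so that evaluation at `1`
is a bijective cocycle, and `x ↦ lam x` is injective or constant by primitivity. -/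
theorem CycleSet.isTrivial_of_primitive {Y : Type} [Finite Y] (C : CycleSet Y) (hnd : C.Nondeg)
    (hP : C.Primitive) (hc : 1 < Nat.card Y) : C.IsTrivial := by
  have hpre := isPreprimitive_of_primitive C hP
  have hnt : Nontrivial Y := Finite.one_lt_card_iff_nontrivial.1 hc
  let A := Subgroup.closure (Set.range (C.lam hnd))
  have hAcomm : IsMulCommutative A := Subgroup.isMulCommutative_closure (by
    rintro _ ⟨x, rfl⟩ _ ⟨y, rfl⟩
    exact C.lam_comm hnd x y)
  let _ : CommGroup A :=
    { (inferInstance : Group A) with mul_comm := hAcomm.is_comm.comm }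
  have hlam : ∀ x, C.lam hnd x ∈ A := fun x => Subgroup.subset_closure ⟨x, rfl⟩
  have hst : ∀ h, ∀ a ∈ A, rightConj C.G h a ∈ A := by
    intro h
    change A ≤ A.comap (rightConj C.G h).toMonoidHom
    rw [Subgroup.closure_le]
    rintro _ ⟨x, rfl⟩
    change rightConj C.G h (C.lam hnd x) ∈ A
    rw [C.rightConj_lam]
    exact hlam _
  let _ : DistribMulAction C.G (Additive A) :=
    { smul := fun h a => Additive.ofMul ⟨rightConj C.G h a.toMul.1, hst h _ a.toMul.2⟩
      one_smul := fun a => congrArg Additive.ofMul (Subtype.ext (by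
        change rightConj C.G 1 a.toMul.1 = a.toMul.1
        rw [map_one]; rfl))
      mul_smul := fun h k a => congrArg Additive.ofMul (Subtype.ext (by
        change rightConj C.G (h * k) a.toMul.1 = rightConj C.G h (rightConj C.G k a.toMul.1)
        rw [map_mul]; rfl))
      smul_zero := fun h => congrArg Additive.ofMul (Subtype.ext (by
        change rightConj C.G h 1 = 1
        rw [map_one]))
      smul_add := fun h a b => congrArg Additive.ofMul (Subtype.ext (by
        change rightConj C.G h (a.toMul.1 * b.toMul.1) = _
        rw [map_mul]; rfl)) }
  let ev : Additive A → C.G := fun a => a.toMul.1 1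
  have hsurj : Function.Surjective ev := by
    rintro ⟨g, hg⟩
    have hg' : g ∈ Subgroup.closure (Set.range C.sigma) := hg
    induction hg' using Subgroup.closure_induction_left with
    | one => exact ⟨0, rfl⟩
    | mul_left s hs w hw ih =>
      obtain ⟨y, rfl⟩ := hs
      obtain ⟨a, ha⟩ := ih hw
      refine ⟨Additive.ofMul (⟨C.lam hnd ((⟨w, hw⟩ : C.G)⁻¹ • y), hlam _⟩ * a.toMul), ?_⟩
      change C.lam hnd _ (ev a) = _
      rw [ha, C.lam_apply, smul_inv_smul]
      rfl
    | inv_mul_cancel s hs w hw ih =>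
      obtain ⟨y, rfl⟩ := hs
      obtain ⟨a, ha⟩ := ih hw
      refine ⟨Additive.ofMul
        (⟨C.lam hnd ((⟨(C.sigma y)⁻¹ * w, hg⟩ : C.G)⁻¹ • y), hlam _⟩⁻¹ * a.toMul), ?_⟩
      change (C.lam hnd _)⁻¹ (ev a) = _
      rw [ha, Equiv.Perm.inv_eq_iff_eq, C.lam_apply, smul_inv_smul]
      exact Subtype.ext (mul_inv_cancel_left _ _).symm
  have hcm : ∀ (a b : Additive A) (g : C.G), a.toMul.1 (b.toMul.1 g) = b.toMul.1 (a.toMul.1 g) :=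
    fun a b g => congrArg (fun c : A => c.1 g) (mul_comm a.toMul b.toMul)
  have hinj : Function.Injective ev := by
    intro a b hab
    have hab' : a.toMul.1 1 = b.toMul.1 1 := hab
    refine congrArg Additive.ofMul (Subtype.ext (Equiv.ext fun g => ?_) : a.toMul = b.toMul)
    obtain ⟨c, rfl⟩ := hsurj g
    change a.toMul.1 (c.toMul.1 1) = b.toMul.1 (c.toMul.1 1)
    rw [hcm, hcm b, hab']
  have hadd : ∀ a b, ev (a + b) = ev (ev a • b) * ev a := by
    intro a b
    change a.toMul.1 (b.toMul.1 1) = b.toMul.1 (1 * ev a) * (ev a)⁻¹ * ev a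
    rw [inv_mul_cancel_right, one_mul, hcm]
  let E : Y → Additive A := fun x => Additive.ofMul ⟨C.lam hnd x, hlam x⟩
  have hE : ∀ (g : C.G) x, g • E x = E (g • x) := fun g x =>
    congrArg Additive.ofMul (Subtype.ext (C.rightConj_lam hnd x g))
  have hspan : AddSubgroup.closure (Set.range E) = ⊤ := by
    rw [eq_top_iff]
    rintro ⟨a, ha⟩ -
    induction ha using Subgroup.closure_induction with
    | mem a h =>
      obtain ⟨x, rfl⟩ := h
      exact AddSubgroup.subset_closure ⟨x, rfl⟩
    | one => exact AddSubgroup.zero_mem _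
    | mul a b _ _ ha hb => exact AddSubgroup.add_mem _ ha hb
    | inv a _ ha => exact AddSubgroup.neg_mem _ ha
  rcases inj_or_const (G := C.G) E (fun g x y h => by rw [← hE, h, hE]) with hi | hconst
  · exact (no_faithful_primitive ev ⟨hinj, hsurj⟩ hadd E hE hspan hi).elim
  · intro x y z
    have h1 : C.lam hnd x 1 = C.lam hnd y 1 :=
      congrArg (fun a : Additive A => a.toMul.1 1) (hconst x y)
    rw [C.lam_apply, C.lam_apply, mul_one, mul_one, one_smul, one_smul] at h1
    exact congrArg (fun g : C.G => g • z) h1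

/-! ### Cyclic cycle sets -/

/-- The cyclic cycle set on `ZMod n`: every left multiplication is `y ↦ y + 1`. -/
def CycleSet.cyclic (n : ℕ) : CycleSet (ZMod n) where
  op _ y := y + 1
  bij _ := (Equiv.addRight (1 : ZMod n)).bijective
  cyc _ _ _ := rfl

theorem CycleSet.cyclic_translation (n : ℕ) (k : ℤ) :
    ∃ g ∈ (cyclic n).G, ∀ a, g a = a + k := by
  refine ⟨(cyclic n).sigma 0 ^ k,
    Subgroup.zpow_mem _ (cyclic n |>.sig 0).2 k, ?_⟩
  have h1 : ∀ a, (cyclic n).sigma 0 a = a + 1 := fun a => rfl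
  induction k using Int.induction_on with
  | zero => intro a; simp
  | succ i ih => intro a; rw [zpow_add_one, Equiv.Perm.mul_apply, h1, ih]; push_cast; ring
  | pred i ih =>
    intro a
    rw [zpow_sub_one, Equiv.Perm.mul_apply, ih]
    have h2 : ((cyclic n).sigma 0)⁻¹ a = a - 1 := by
      rw [Equiv.Perm.inv_eq_iff_eq, h1, sub_add_cancel]
    rw [h2]; push_cast; ring

theorem CycleSet.cyclic_primitive (ℓ : ℕ) (hl : ℓ.Prime) : (cyclic ℓ).Primitive := by
  have := Fact.mk hl
  refine ⟨fun a b => ?_, fun s hs => ?_⟩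
  · obtain ⟨k, hk⟩ := ZMod.intCast_surjective (b - a)
    obtain ⟨g, hg, h⟩ := cyclic_translation ℓ k
    exact ⟨g, hg, by rw [h, hk, add_sub_cancel]⟩
  · by_contra! hcon
    obtain ⟨hns, hnu⟩ := hcon
    obtain ⟨a, ha, b, hb, hab⟩ := hns
    have hstep : ∀ x ∈ s, x + (b - a) ∈ s := by
      obtain ⟨k, hk⟩ := ZMod.intCast_surjective (b - a)
      obtain ⟨g, hg, h⟩ := cyclic_translation ℓ k
      have hga : g a = b := by rw [h, hk, add_sub_cancel]
      rcases hs g hg with h1 | h1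
      · intro x hx
        rw [← h1]
        exact ⟨x, hx, by rw [h, hk]⟩
      · exact (Set.disjoint_left.1 h1 ⟨a, ha, hga⟩ hb).elim
    have hmul : ∀ m : ℕ, a + m * (b - a) ∈ s := by
      intro m
      induction m with
      | zero => simpa using ha
      | succ m ih =>
        have := hstep _ ih
        rwa [add_assoc, ← add_one_mul, ← Nat.cast_succ] at this
    refine hnu (Set.eq_univ_of_forall fun x => ?_)
    have hne : b - a ≠ 0 := sub_ne_zero.2 (Ne.symm hab)
    have := hmul ((x - a) / (b - a)).val
    rwa [ZMod.natCast_zmod_val, div_mul_cancel₀ _ hne, add_sub_cancel] at this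

/-- A transitive cyclic group generated by `s` identifies `Y` with `ZMod n`, which maps onto
`ZMod ℓ` for any prime divisor `ℓ` of `n`. -/
theorem CycleSet.exists_cyclic_quotient {Y : Type} (D : CycleSet Y) (htriv : D.IsTrivial)
    (hind : D.Indec) (hc : 1 < Nat.card Y) :
    ∃ ℓ : ℕ, ℓ.Prime ∧ ∃ c : Y → ZMod ℓ, Function.Surjective c ∧ IsHom D (cyclic ℓ) c := by
  have hfin : Finite Y := Nat.finite_of_card_ne_zero (by omega)
  have hnt : Nontrivial Y := Finite.one_lt_card_iff_nontrivial.1 hc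
  obtain ⟨y0, y1, hy⟩ := exists_pair_ne Y
  set s := D.sigma y0 with hs
  have hsig : ∀ x y, D.op x y = s y := fun x y => htriv x y0 y
  have hG : D.G = Subgroup.zpowers s := by
    have : Set.range D.sigma = {s} := by
      ext g
      constructor
      · rintro ⟨x, rfl⟩
        exact Equiv.ext (hsig x)
      · rintro rfl
        exact ⟨y0, rfl⟩
    rw [Subgroup.zpowers_eq_closure, ← this]
    rfl
  have horb : ∀ y, ∃ k : ℤ, (s ^ k) y0 = y := by
    intro y
    obtain ⟨g, hg, h⟩ := hind y0 y
    rw [hG] at hg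
    obtain ⟨k, rfl⟩ := Subgroup.mem_zpowers_iff.1 hg
    exact ⟨k, h⟩
  set n := Function.minimalPeriod (s • ·) y0 with hn
  have hdvd : ∀ k : ℤ, (s ^ k) y0 = y0 ↔ (n : ℤ) ∣ k := fun k =>
    MulAction.zpow_smul_eq_iff_minimalPeriod_dvd (a := s) (b := y0) (n := k)
  have hn1 : n ≠ 1 := by
    intro h
    obtain ⟨k, hk⟩ := horb y1
    exact hy (((hdvd k).2 (by rw [h]; simp)).symm.trans hk)
  choose k hk using horb
  have hwd : ∀ i j : ℤ, (s ^ i) y0 = (s ^ j) y0 → (i : ZMod n.minFac) = j := by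
    intro i j hij
    rw [← sub_eq_zero, ← Int.cast_sub, ZMod.intCast_zmod_eq_zero_iff_dvd]
    refine (Int.natCast_dvd_natCast.2 n.minFac_dvd).trans ((hdvd _).1 ?_)
    rw [sub_eq_neg_add, zpow_add, Equiv.Perm.mul_apply, hij, ← Equiv.Perm.mul_apply, ← zpow_add,
      neg_add_cancel, zpow_zero, Equiv.Perm.one_apply]
  refine ⟨n.minFac, Nat.minFac_prime hn1, fun y => (k y : ZMod n.minFac), fun z => ?_,
    fun a b => ?_⟩
  · obtain ⟨j, rfl⟩ := ZMod.intCast_surjective z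
    exact ⟨(s ^ j) y0, hwd _ _ (hk _)⟩
  · change _ = ((k b : ℤ) : ZMod n.minFac) + 1
    rw [← Int.cast_one, ← Int.cast_add]
    refine hwd _ _ ?_
    rw [hk, hsig, add_comm, zpow_add, zpow_one, Equiv.Perm.mul_apply, hk]

theorem CycleSet.nondeg_of_surjective {X Y : Type} [Finite Y] {C : CycleSet X} {D : CycleSet Y}
    (hnd : C.Nondeg) {p : X → Y} (hp : Function.Surjective p) (hh : IsHom C D p) : D.Nondeg := by
  refine Finite.surjective_iff_bijective.1 fun y => ?_
  obtain ⟨x, rfl⟩ := hp y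
  obtain ⟨z, rfl⟩ := hnd.2 x
  exact ⟨p z, (hh z z).symm⟩

open CycleSet

theorem statement_0 {X : Type} [Finite X] (C : CycleSet X)
    (hnd : C.Nondeg) (hind : C.Indec) (hcard : 1 < Nat.card X) :
    C.HasFPL ↔
      ∃ (Y : Type) (_ : Finite Y) (D : CycleSet Y),
        D.IsTrivial ∧ D.Indec ∧ 1 < Nat.card Y ∧
          ∃ p : X → Y, Function.Surjective p ∧ IsHom C D p := by
  constructor
  · rintro ⟨k, hk, T, hT, CS, e, he, hhe, hlt, hp, hprim⟩
    have hcomp : ∀ i, i < k → ∃ p : X → T i, Function.Surjective p ∧ IsHom C (CS i) p := by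
      intro i
      induction i with
      | zero => exact fun _ => ⟨e, he.2, hhe⟩
      | succ i ih =>
        intro hi
        obtain ⟨p, hps, hph⟩ := ih (by omega)
        obtain ⟨q, hqs, hqh⟩ := hp i hi
        exact ⟨q ∘ p, hqs.comp hps, fun a b => by
          change q (p _) = _
          rw [hph, hqh]; rfl⟩
    have h1 : 1 < Nat.card (T (k - 1)) := by
      rcases Nat.lt_or_ge 1 k with h | h
      · obtain ⟨i, rfl⟩ := Nat.exists_eq_add_of_lt h
        exact (hlt (1 + i - 1) (by omega)).2.trans_eq (by congr 2; omega)
      · obtain rfl : k = 1 := by omega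
        rwa [← Nat.card_congr (Equiv.ofBijective e he)]
    obtain ⟨p, hps, hph⟩ := hcomp (k - 1) (by omega)
    exact ⟨T (k - 1), hT _, CS (k - 1),
      (CS (k - 1)).isTrivial_of_primitive (nondeg_of_surjective hnd hps hph) hprim h1,
      hprim.1, h1, p, hps, hph⟩
  · rintro ⟨Y, _, D, htriv, hD, hc, p, hps, hph⟩
    obtain ⟨ℓ, hl, c, hcs, hch⟩ := D.exists_cyclic_quotient htriv hD hc
    have := Fact.mk hl
    have hs : Function.Surjective (c ∘ p) := hcs.comp hps
    have hh : IsHom C (cyclic ℓ) (c ∘ p) := fun a b => by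
      change c (p _) = _
      rw [hph, hch]; rfl
    by_cases hb : Function.Injective (c ∘ p)
    · exact ⟨1, le_rfl, fun _ => ZMod ℓ, fun _ => inferInstance, fun _ => cyclic ℓ, c ∘ p,
        ⟨hb, hs⟩, hh, fun i hi => by omega, fun i hi => by omega, cyclic_primitive ℓ hl⟩
    -- the chain `X → ZMod ℓ`, continued by junk beyond its second member
    · let T : ℕ → Type := fun i => Nat.casesOn i X fun _ => ZMod ℓ
      let CS : ∀ i, CycleSet (T i) := fun i =>
        Nat.casesOn (motive := fun i => CycleSet (T i)) i C fun _ => cyclic ℓ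
      have hT : ∀ i, Finite (T i) := fun i => by
        cases i with
        | zero => exact ‹Finite X›
        | succ i => exact (inferInstance : Finite (ZMod ℓ))
      refine ⟨2, by omega, T, hT, CS, id, Function.bijective_id, fun _ _ => rfl, fun i hi => ?_,
        fun i hi => ?_, cyclic_primitive ℓ hl⟩
      · obtain rfl : i = 0 := by omega
        change Nat.card (ZMod ℓ) < Nat.card X ∧ 1 < Nat.card (ZMod ℓ)
        refine ⟨lt_of_le_of_ne (Nat.card_le_card_of_surjective _ hs) fun h => hb ?_, ?_⟩
        · exact ((Nat.bijective_iff_surjective_and_card _).2 ⟨hs, h.symm⟩).1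
        · rw [Nat.card_zmod]; exact hl.one_lt
      · obtain rfl : i = 0 := by omega
        exact ⟨c ∘ p, hs, hh⟩
end

section
/- Let X be a finite non-degenerate indecomposable cycle set. Then the displacement group Dis(X) is a normal subgroup of the associated permutation group G(X), the cosets σ_x Dis(X) coincide for all x ∈ X, and the quotient group G(X)/Dis(X) is cyclic, generated by the common coset σ_x Dis(X). -/
open CycleSet

namespace CycleSet

variable {X : Type}

lemma sigma_op_mul (C : CycleSet X) (x y : X) :
    C.sigma (C.op x y) * C.sigma x = C.sigma (C.op y x) * C.sigma y :=
  Equiv.ext fun z => C.cyc x y z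

lemma mul_inv_mem_Dis (C : CycleSet X) (x y : X) : C.sigma x * (C.sigma y)⁻¹ ∈ C.Dis :=
  Subgroup.subset_closure ⟨x, y, rfl⟩

/-- If `x·y = a` and `y·x = b`, then `a·(x·x) = b·b`, so `a` and `b` determine the square of `x`
and hence `x`; symmetrically they determine `y`. -/
lemma op_pair_injective (C : CycleSet X) (hnd : C.Nondeg) :
    Function.Injective fun p : X × X => (C.op p.2 p.1, C.op p.1 p.2) := by
  rintro ⟨x, y⟩ ⟨x', y'⟩ h
  obtain ⟨h₁, h₂⟩ := Prod.mk.inj h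
  dsimp only at h₁ h₂
  have hx : x = x' := by
    apply hnd.injective
    apply (C.bij (C.op x y)).injective
    dsimp only
    rw [C.cyc x y x, h₁, h₂, C.cyc x' y' x']
  have hy : y = y' := by
    apply hnd.injective
    apply (C.bij (C.op y x)).injective
    dsimp only
    rw [C.cyc y x y, h₁, h₂, C.cyc y' x' y']
  rw [hx, hy]

/-- All `σ_x` lie in the same left coset of `Dis(X)`. -/
lemma inv_mul_mem_Dis [Finite X] (C : CycleSet X) (hnd : C.Nondeg) (a b : X) :
    (C.sigma a)⁻¹ * C.sigma b ∈ C.Dis := by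
  obtain ⟨⟨x, y⟩, h⟩ := Finite.surjective_of_injective (C.op_pair_injective hnd) (a, b)
  obtain ⟨rfl, rfl⟩ := Prod.mk.inj h
  have key : (C.sigma (C.op y x))⁻¹ * C.sigma (C.op x y) = C.sigma y * (C.sigma x)⁻¹ := by
    rw [inv_mul_eq_iff_eq_mul, ← mul_assoc, eq_mul_inv_iff_mul_eq, sigma_op_mul]
  exact key ▸ C.mul_inv_mem_Dis y x

lemma conj_inv_mem_Dis [Finite X] (C : CycleSet X) (hnd : C.Nondeg) (x : X)
    {d : Equiv.Perm X} (hd : d ∈ C.Dis) : (C.sigma x)⁻¹ * d * C.sigma x ∈ C.Dis := by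
  have hle : C.Dis ≤ C.Dis.comap (MulAut.conj (C.sigma x)⁻¹).toMonoidHom := by
    refine (Subgroup.closure_le _).2 ?_
    rintro _ ⟨a, b, rfl⟩
    have h := C.Dis.mul_mem (C.inv_mul_mem_Dis hnd x a) (C.inv_mul_mem_Dis hnd b x)
    simpa [mul_assoc] using h
  simpa using hle hd

/-- Since `Sym(X)` is finite, being mapped into itself by conjugation with each `σ_x⁻¹` already
forces `Dis(X)` to be normalized by `σ_x`. -/
lemma G_le_normalizer_Dis [Finite X] (C : CycleSet X) (hnd : C.Nondeg) :
    C.G ≤ Subgroup.normalizer (C.Dis : Set (Equiv.Perm X)) := by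
  refine (Subgroup.closure_le _).2 ?_
  rintro _ ⟨x, rfl⟩
  rw [SetLike.mem_coe, ← inv_mem_iff]
  refine Subgroup.mem_normalizer_fintype fun d hd => ?_
  simpa using C.conj_inv_mem_Dis hnd x hd

lemma Dis_le_G (C : CycleSet X) : C.Dis ≤ C.G := by
  refine (Subgroup.closure_le _).2 ?_
  rintro _ ⟨x, y, rfl⟩
  exact C.G.mul_mem (Subgroup.subset_closure ⟨x, rfl⟩)
    (C.G.inv_mem (Subgroup.subset_closure ⟨y, rfl⟩))

end CycleSet

theorem statement_1 {X : Type} [Finite X] (C : CycleSet X)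
    (hnd : C.Nondeg) (hind : C.Indec) :
    C.Dis ≤ C.G ∧
    (C.Dis.subgroupOf C.G).Normal ∧
    (∀ x y : X, (C.sigma x)⁻¹ * C.sigma y ∈ C.Dis) ∧
    (∀ x : X, ∀ g ∈ C.G, ∃ n : ℤ, (C.sigma x ^ n)⁻¹ * g ∈ C.Dis) := by
  have hN := C.G_le_normalizer_Dis hnd
  refine ⟨C.Dis_le_G, (Subgroup.normal_subgroupOf_iff_le_normalizer C.Dis_le_G).2 hN,
    C.inv_mul_mem_Dis hnd, fun x g hg => ?_⟩
  have hσ : C.sigma x ∈ C.G := Subgroup.subset_closure ⟨x, rfl⟩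
  have hG : C.G ≤ Subgroup.zpowers (C.sigma x) ⊔ C.Dis := by
    refine (Subgroup.closure_le _).2 ?_
    rintro _ ⟨y, rfl⟩
    have h := Subgroup.mul_mem_sup (Subgroup.mem_zpowers (C.sigma x)) (C.inv_mul_mem_Dis hnd x y)
    rwa [mul_inv_cancel_left] at h
  have hmem : g ∈ ((Subgroup.zpowers (C.sigma x) ⊔ C.Dis : Subgroup _) : Set (Equiv.Perm X)) :=
    hG hg
  -- The join is the product set `⟨σ_x⟩ Dis(X)` because `σ_x` normalizes `Dis(X)`.
  rw [Subgroup.coe_mul_of_left_le_normalizer_right _ _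
    (Subgroup.zpowers_le.2 (hN hσ))] at hmem
  obtain ⟨_, ⟨n, rfl⟩, d, hd, rfl⟩ := hmem
  exact ⟨n, by simpa using hd⟩
end
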